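/- arXiv:1602.02882 — 3 statements merged into one kernel-verified Lean document; each statement's English description precedes it below -/
import Mathlib

section
/- Let d ≥ 1, p ≥ 1 and let c_{kℓ} : ℝ^d → ℝ (1 ≤ k,ℓ ≤ p) be the entries of a matrix covariance function C. Assume: (i) there exist constants A < ∞ and τ > 0 such that |c_{kℓ}(x)| ≤ A/(1 + |x|^{d+τ}) for all x ∈ ℝ^d and all k,ℓ; (ii) the Fourier inversion c_{kℓ}(x) = ∫_{ℝ^d} ĉ_{kℓ}(f) e^{i f·x} df holds for all x and all k,ℓ, where ĉ_{kℓ}(f) = (2π)^{-d} ∫_{ℝ^d} c_{kℓ}(x) e^{-i f·x} dx; (iii) for every f ∈ ℝ^d the Hermitian p×p matrix Ĉ(f) = {ĉ_{kℓ}(f)} has smallest eigenvalue λ₁(Ĉ(f)) > 0; (iv) there exists Δ > 0 such that for each k = 1,…,p the points (x^{(k)}_i)_{i ∈ ℕ⁺} in ℝ^d satisfy |x^{(k)}_i − x^{(k)}_j| ≥ Δ whenever i ≠ j. Then the covariance matrices Σ (of size N × N with N = n₁+⋯+n_p, with entry at row N_{k−1}+i and column N_{ℓ−1}+j equal to c_{kℓ}(x^{(k)}_i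 − x^{(ℓ)}_j), where N_k = n₁+⋯+n_k and N₀ = 0) satisfy inf over all n₁,…,n_p ∈ ℕ⁺ of λ₁(Σ) > 0, i.e. the smallest eigenvalue of Σ is bounded away from zero uniformly in n₁,…,n_p. -/
open MeasureTheory Matrix Complex Filter
open scoped BigOperators Real

open scoped FourierTransform SchwartzMap LineDeriv ContDiff ComplexOrder

section BandLimited

variable {E : Type*} [NormedAddCommGroup E] [InnerProductSpace ℝ E] [FiniteDimensional ℝ E]
  [MeasurableSpace E] [BorelSpace E] {ι : Type*} [Fintype ι]

/-- The Fourier transform of a translate. -/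
lemma SchwartzMap.fourier_compSubConstCLM_apply (η : 𝓢(E, ℂ)) (a w : E) :
    𝓕 (η.compSubConstCLM ℂ a) w = cexp (((-2 * π * inner ℝ a w : ℝ) : ℂ) * I) * 𝓕 η w := by
  rw [SchwartzMap.fourier_coe, SchwartzMap.fourier_coe, Real.fourier_eq', Real.fourier_eq',
    ← integral_const_mul,
    ← integral_sub_right_eq_self (fun v => cexp (((-2 * π * inner ℝ a w : ℝ) : ℂ) * I) *
      (cexp (((-2 * π * inner ℝ v w : ℝ) : ℂ) * I) • η v)) a]
  congr 1 with v
  rw [SchwartzMap.compSubConstCLM_apply, smul_eq_mul, smul_eq_mul, ← mul_assoc, ← Complex.exp_add,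
    inner_sub_left]
  congr 2
  push_cast
  ring

/-- The Fourier transform of a finite combination of translates. -/
lemma SchwartzMap.fourier_sum_smul_compSubConstCLM_apply (η : 𝓢(E, ℂ)) (v : ι → ℝ) (x : ι → E)
    (w : E) :
    𝓕 (∑ i, (v i : ℂ) • η.compSubConstCLM ℂ (x i)) w =
      (∑ i, (v i : ℂ) * cexp (((-2 * π * inner ℝ (x i) w : ℝ) : ℂ) * I)) * 𝓕 η w := by
  rw [← SchwartzMap.fourierTransformCLM_apply ℂ, map_sum, _root_.sum_apply, Finset.sum_mul]
  refine Finset.sum_congr rfl fun i _ => ?_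
  rw [map_smul, _root_.smul_apply, SchwartzMap.fourierTransformCLM_apply,
    SchwartzMap.fourier_compSubConstCLM_apply, smul_eq_mul]
  exact (mul_assoc _ _ _).symm

/-- If at most one term is nonzero, the squared norm of a sum is the sum of the squared norms. -/
lemma norm_sum_sq_eq_sum_norm_sq_of_pairwise_zero {F : Type*} [NormedAddCommGroup F] (u : ι → F)
    (h : ∀ i j, i ≠ j → u i = 0 ∨ u j = 0) : ‖∑ i, u i‖ ^ 2 = ∑ i, ‖u i‖ ^ 2 := by
  by_cases hu : ∃ i, u i ≠ 0
  · obtain ⟨i, hi⟩ := hu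
    have hz : ∀ j, j ≠ i → u j = 0 := fun j hj => (h j i hj).resolve_right hi
    rw [Fintype.sum_eq_single i hz, Fintype.sum_eq_single i fun j hj => by simp [hz j hj]]
  · push Not at hu
    simp [hu]

/-- Plancherel's theorem for a combination of translates with disjoint supports. -/
lemma SchwartzMap.integral_norm_trigSum_mul_fourier_sq (η : 𝓢(E, ℂ)) {Δ : ℝ}
    (hη : ∀ y, η y ≠ 0 → ‖y‖ < Δ / 2) (v : ι → ℝ) (x : ι → E)
    (hx : ∀ i j, i ≠ j → Δ ≤ ‖x i - x j‖) :
    Integrable (fun w : E => ‖(∑ i, (v i : ℂ) * cexp (((-2 * π * inner ℝ (x i) w : ℝ) : ℂ) * I)) *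
        𝓕 η w‖ ^ 2) ∧
      ∫ w : E, ‖(∑ i, (v i : ℂ) * cexp (((-2 * π * inner ℝ (x i) w : ℝ) : ℂ) * I)) *
        𝓕 η w‖ ^ 2 = (∑ i, v i ^ 2) * ∫ y, ‖η y‖ ^ 2 := by
  simp_rw [← SchwartzMap.fourier_sum_smul_compSubConstCLM_apply]
  have hintegrable : ∀ f : 𝓢(E, ℂ), Integrable (fun y => ‖f y‖ ^ 2) := fun f =>
    (memLp_two_iff_integrable_sq_norm f.continuous.aestronglyMeasurable).1 (f.memLp 2)
  refine ⟨hintegrable _, ?_⟩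
  rw [SchwartzMap.integral_norm_sq_fourier]
  have hpt : ∀ y, ‖(∑ i, (v i : ℂ) • η.compSubConstCLM ℂ (x i)) y‖ ^ 2 =
      ∑ i, v i ^ 2 * ‖η (y - x i)‖ ^ 2 := by
    intro y
    rw [_root_.sum_apply, norm_sum_sq_eq_sum_norm_sq_of_pairwise_zero]
    · simp [mul_pow]
    · intro i j hij
      by_contra! hne
      have hi : η (y - x i) ≠ 0 := fun h => hne.1 (by simp [h])
      have hj : η (y - x j) ≠ 0 := fun h => hne.2 (by simp [h])
      have htri : ‖x i - x j‖ ≤ ‖y - x j‖ + ‖y - x i‖ := by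
        simpa using norm_sub_le (y - x j) (y - x i)
      linarith [hη _ hi, hη _ hj, hx i j hij]
  simp_rw [hpt]
  rw [integral_finsetSum _ fun i _ => ((hintegrable η).comp_sub_right (x i)).const_mul _, Finset.sum_mul]
  refine Finset.sum_congr rfl fun i _ => ?_
  rw [integral_const_mul, integral_sub_right_eq_self (fun y => ‖η y‖ ^ 2)]

/-- A nonzero Schwartz function supported in a prescribed ball around the origin. -/
lemma SchwartzMap.exists_tsupport_subset_ball {r : ℝ} (hr : 0 < r) :
    ∃ η : 𝓢(E, ℂ), tsupport η ⊆ Metric.ball 0 r ∧ 0 < ∫ y, ‖η y‖ ^ 2 := by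
  let b : ContDiffBump (0 : E) := ⟨r / 4, r / 2, by linarith, by linarith⟩
  have hc : HasCompactSupport (fun y => (b y : ℂ)) :=
    b.hasCompactSupport.comp_left Complex.ofReal_zero
  have hs : ContDiff ℝ ∞ (fun y => (b y : ℂ)) := Complex.ofRealCLM.contDiff.comp b.contDiff
  refine ⟨hc.toSchwartzMap hs, ?_, ?_⟩
  · have h1 : tsupport (fun y => (b y : ℂ)) ⊆ tsupport b :=
      closure_mono fun y hy => by simpa using hy
    refine (h1.trans b.tsupport_eq.subset).trans (Metric.closedBall_subset_ball ?_)
    change r / 2 < r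
    linarith
  · have hcont : Continuous fun y => ‖(hc.toSchwartzMap hs : 𝓢(E, ℂ)) y‖ ^ 2 :=
      (SchwartzMap.continuous _).norm.pow 2
    refine hcont.integral_pos_of_hasCompactSupport_nonneg_nonzero (x := 0) ?_
      (fun y => by positivity) ?_
    · exact hc.comp_left (g := fun z : ℂ => ‖z‖ ^ 2) (by simp)
    · have : b 0 = 1 := b.one_of_mem_closedBall (by simp [b.rIn_pos.le])
      simp [this]

/-- The Fourier transform of a directional derivative, in absolute value. -/
lemma SchwartzMap.norm_fourier_lineDerivOp_apply_sq (η : 𝓢(E, ℂ)) (m w : E) :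
    ‖𝓕 (∂_{m} η) w‖ ^ 2 = (2 * π) ^ 2 * (inner ℝ w m) ^ 2 * ‖𝓕 η w‖ ^ 2 := by
  have : (inner ℝ · m : E → ℝ).HasTemperateGrowth := ((innerSL ℝ).flip m).hasTemperateGrowth
  rw [SchwartzMap.fourier_lineDerivOp_eq, _root_.smul_apply,
    SchwartzMap.smulLeftCLM_apply_apply this]
  simp [mul_pow, mul_assoc]

/-- Trigonometric sums with separated frequencies are bounded below in `L²` of a large ball. -/
theorem exists_mul_sum_sq_le_integral_norm_trigSum_sq {Δ : ℝ} (hΔ : 0 < Δ) :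
    ∃ R κ : ℝ, 0 < κ ∧ ∀ (ι : Type) [Fintype ι] (v : ι → ℝ) (x : ι → E),
      (∀ i j, i ≠ j → Δ ≤ ‖x i - x j‖) →
      κ * ∑ i, v i ^ 2 ≤ ∫ w in Metric.closedBall (0 : E) R,
        ‖∑ i, (v i : ℂ) * cexp (((-2 * π * inner ℝ (x i) w : ℝ) : ℂ) * I)‖ ^ 2 := by
  obtain ⟨η, hsupp, ha⟩ := SchwartzMap.exists_tsupport_subset_ball (E := E) (half_pos hΔ)
  let e := stdOrthonormalBasis ℝ E
  set a := ∫ y, ‖η y‖ ^ 2 with ha_def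
  set b := ∑ m, ∫ y, ‖(∂_{e m} η) y‖ ^ 2 with hb_def
  have hb : 0 ≤ b := Finset.sum_nonneg fun m _ => integral_nonneg fun y => by positivity
  set M := ‖η.toLp 1‖ + 1 with hM_def
  have hM : 0 < M := by positivity
  have hηM : ∀ w, ‖𝓕 η w‖ ≤ M := fun w =>
    (SchwartzMap.norm_fourier_apply_le_toLp_one η w).trans (by simp [hM_def])
  have hη0 : ∀ y, η y ≠ 0 → ‖y‖ < Δ / 2 := fun y hy => by
    simpa using hsupp (subset_tsupport _ hy)
  have hηm : ∀ m y, (∂_{e m} η) y ≠ 0 → ‖y‖ < Δ / 2 := fun m y hy => by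
    rw [SchwartzMap.lineDerivOp_apply_eq_fderiv] at hy
    have hy' : fderiv ℝ η y ≠ 0 := fun h => hy (by simp [h])
    simpa using hsupp (support_fderiv_subset ℝ hy')
  clear_value a b M
  set R := Real.sqrt (2 * b / a + 1) with hR_def
  have hR2 : R ^ 2 = 2 * b / a + 1 := Real.sq_sqrt (by positivity)
  have hRpos : 0 < R := Real.sqrt_pos.2 (by positivity)
  clear_value R
  refine ⟨R, a / (2 * M ^ 2), by positivity, fun ι _ v x hx => ?_⟩
  set g : E → ℂ := fun w => ∑ i, (v i : ℂ) * cexp (((-2 * π * inner ℝ (x i) w : ℝ) : ℂ) * I)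
    with hg_def
  set S := ∑ i, v i ^ 2 with hS_def
  have hS : 0 ≤ S := Finset.sum_nonneg fun i _ => sq_nonneg _
  have hgc : Continuous g := by fun_prop
  obtain ⟨hintegrable, heq⟩ := η.integral_norm_trigSum_mul_fourier_sq hη0 v x hx
  have hderiv := fun m => (∂_{e m} η).integral_norm_trigSum_mul_fourier_sq (hηm m) v x hx
  have hsum : ∀ w, ∑ m, ‖g w * 𝓕 (∂_{e m} η) w‖ ^ 2 =
      (2 * π) ^ 2 * ‖w‖ ^ 2 * ‖g w * 𝓕 η w‖ ^ 2 := by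
    intro w
    simp_rw [norm_mul, mul_pow, SchwartzMap.norm_fourier_lineDerivOp_apply_sq]
    rw [← e.sum_sq_inner_left w, Finset.mul_sum, Finset.sum_mul]
    exact Finset.sum_congr rfl fun m _ => by ring
  have hsumint : Integrable fun w => ∑ m, ‖g w * 𝓕 (∂_{e m} η) w‖ ^ 2 :=
    integrable_finsetSum _ fun m _ => (hderiv m).1
  have hsumeq : ∫ w, ∑ m, ‖g w * 𝓕 (∂_{e m} η) w‖ ^ 2 = S * b := by
    rw [integral_finsetSum _ fun m _ => (hderiv m).1, hb_def, Finset.mul_sum]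
    exact Finset.sum_congr rfl fun m _ => (hderiv m).2
  have hBint : Integrable ((Metric.closedBall (0 : E) R).indicator fun w => M ^ 2 * ‖g w‖ ^ 2) := by
    rw [integrable_indicator_iff measurableSet_closedBall]
    exact (by fun_prop : Continuous fun w => M ^ 2 * ‖g w‖ ^ 2).continuousOn.integrableOn_compact
      (isCompact_closedBall _ _)
  have hpi : 1 ≤ (2 * π) ^ 2 := by nlinarith [Real.pi_gt_three]
  have hpt : ∀ w, ‖g w * 𝓕 η w‖ ^ 2 ≤
      (Metric.closedBall (0 : E) R).indicator (fun w => M ^ 2 * ‖g w‖ ^ 2) w +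
        (R ^ 2)⁻¹ * ∑ m, ‖g w * 𝓕 (∂_{e m} η) w‖ ^ 2 := by
    intro w
    rw [hsum]
    by_cases hw : w ∈ Metric.closedBall (0 : E) R
    · rw [Set.indicator_of_mem hw, norm_mul, mul_pow]
      have h1 : ‖𝓕 η w‖ ^ 2 ≤ M ^ 2 := pow_le_pow_left₀ (norm_nonneg _) (hηM w) 2
      have h2 := mul_le_mul_of_nonneg_left h1 (sq_nonneg ‖g w‖)
      have h3 : 0 ≤ (R ^ 2)⁻¹ * ((2 * π) ^ 2 * ‖w‖ ^ 2 * (‖g w‖ ^ 2 * ‖𝓕 η w‖ ^ 2)) := by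
        positivity
      linarith
    · rw [Set.indicator_of_notMem hw, zero_add, ← mul_assoc]
      have hw' : R < ‖w‖ := by simpa using hw
      refine le_mul_of_one_le_left (by positivity) ?_
      rw [inv_mul_eq_div, one_le_div (by positivity)]
      nlinarith [pow_le_pow_left₀ hRpos.le hw'.le 2, sq_nonneg ‖w‖]
  have hmono := integral_mono hintegrable (hBint.add (hsumint.const_mul _)) hpt
  rw [heq, ← hS_def, ← ha_def] at hmono
  simp only [Pi.add_apply] at hmono
  rw [integral_add hBint (hsumint.const_mul _), integral_const_mul, hsumeq,
    integral_indicator measurableSet_closedBall, integral_const_mul] at hmono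
  have hbR : (R ^ 2)⁻¹ * b ≤ a / 2 := by
    rw [inv_mul_le_iff₀ (by positivity), hR2]
    have : (2 * b / a + 1) * (a / 2) = b + a / 2 := by field_simp
    linarith
  have hSb : (R ^ 2)⁻¹ * (S * b) ≤ S * (a / 2) := by
    nlinarith [mul_le_mul_of_nonneg_left hbR hS]
  rw [div_mul_eq_mul_div, div_le_iff₀ (by positivity)]
  change a * S ≤ (∫ w in Metric.closedBall (0 : E) R, ‖g w‖ ^ 2) * (2 * M ^ 2)
  linarith

end BandLimited

/-- Trigonometric sums with frequencies separated in the sup norm are bounded below in `L²` of a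
compact set. -/
theorem exists_isCompact_mul_sum_sq_le_integral_norm_trigSum_sq (d : ℕ) {Δ : ℝ} (hΔ : 0 < Δ) :
    ∃ K : Set (Fin d → ℝ), IsCompact K ∧ ∃ κ : ℝ, 0 < κ ∧
      ∀ (ι : Type) [Fintype ι] (v : ι → ℝ) (x : ι → Fin d → ℝ),
        (∀ i j, i ≠ j → Δ ≤ ‖x i - x j‖) →
        κ * ∑ i, v i ^ 2 ≤ ∫ f in K,
          ‖∑ i, (v i : ℂ) * cexp (-(I * ((∑ t, f t * x i t : ℝ) : ℂ)))‖ ^ 2 := by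
  have hpi : 0 < 2 * π := by positivity
  obtain ⟨R, κ, hκ, h⟩ := exists_mul_sum_sq_le_integral_norm_trigSum_sq
    (E := EuclideanSpace ℝ (Fin d)) (div_pos hΔ hpi)
  have hK : IsCompact (WithLp.toLp 2 ⁻¹' Metric.closedBall (0 : EuclideanSpace ℝ (Fin d)) R) :=
    (PiLp.homeomorph 2 fun _ : Fin d => ℝ).symm.isCompact_preimage.2 (isCompact_closedBall _ _)
  refine ⟨_, hK, κ, hκ, fun ι _ v x hx => ?_⟩
  refine (h ι v (fun i => WithLp.toLp 2 ((2 * π)⁻¹ • x i)) fun i j hij => ?_).trans_eq ?_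
  · rw [← WithLp.toLp_sub, ← smul_sub, WithLp.toLp_smul, norm_smul, norm_inv,
      Real.norm_of_nonneg hpi.le, div_eq_inv_mul]
    gcongr
    exact (hx i j hij).trans ((pi_norm_le_iff_of_nonneg (norm_nonneg _)).2 fun t =>
      PiLp.norm_apply_le (WithLp.toLp 2 (x i - x j)) t)
  · rw [← (PiLp.volume_preserving_toLp (Fin d)).setIntegral_preimage_emb
      (MeasurableEquiv.toLp 2 (Fin d → ℝ)).measurableEmbedding]
    refine setIntegral_congr_fun hK.measurableSet fun f _ => ?_
    dsimp only
    congr 2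
    refine Finset.sum_congr rfl fun i _ => ?_
    congr 2
    rw [mul_comm I, ← neg_mul, ← Complex.ofReal_neg]
    congr 2
    simp only [PiLp.inner_apply, Pi.smul_apply, smul_eq_mul, RCLike.inner_apply, conj_trivial,
      Finset.mul_sum, ← Finset.sum_neg_distrib]
    refine Finset.sum_congr rfl fun t _ => ?_
    field_simp

/-- A continuous family of positive definite matrices is uniformly positive definite on compact
sets. -/
lemma IsCompact.exists_mul_sum_norm_sq_le_re_dotProduct {T n : Type*} [TopologicalSpace T]
    [Fintype n] {K : Set T} (hK : IsCompact K) {M : T → Matrix n n ℂ} (hM : Continuous M)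
    (hpos : ∀ t, (M t).PosDef) :
    ∃ δ : ℝ, 0 < δ ∧ ∀ t ∈ K, ∀ z : n → ℂ,
      δ * ∑ k, ‖z k‖ ^ 2 ≤ (star z ⬝ᵥ (M t *ᵥ z)).re := by
  obtain ⟨δ, hδ, h⟩ := (hK.prod (isCompact_sphere (0 : EuclideanSpace ℂ n) 1)).exists_forall_le'
    (f := fun q : T × EuclideanSpace ℂ n => (star q.2.ofLp ⬝ᵥ (M q.1 *ᵥ q.2.ofLp)).re) (a := 0)
    (by
      have : Continuous fun q : T × EuclideanSpace ℂ n => q.2.ofLp :=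
        (PiLp.continuous_ofLp 2 _).comp continuous_snd
      have hM' : Continuous fun q : T × EuclideanSpace ℂ n => M q.1 := hM.comp continuous_fst
      exact (Complex.continuous_re.comp
        (this.star.dotProduct (hM'.matrix_mulVec this))).continuousOn)
    (by
      rintro ⟨t, z⟩ ⟨-, hz⟩
      refine (hpos t).re_dotProduct_pos fun h0 => ?_
      have : z = 0 := by ext k; exact congrFun h0 k
      simp [this] at hz)
  refine ⟨δ, hδ, fun t ht z => ?_⟩
  by_cases hz : z = 0
  · simp [hz]
  set y : EuclideanSpace ℂ n := WithLp.toLp 2 z with hy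
  have hy0 : 0 < ‖y‖ := norm_pos_iff.2 fun h0 => hz (by simpa [hy] using h0)
  have hnorm : ∑ k, ‖z k‖ ^ 2 = ‖y‖ ^ 2 := (EuclideanSpace.norm_sq_eq y).symm
  have key := h (t, ((‖y‖⁻¹ : ℝ) : ℂ) • y) ⟨ht, by simp [norm_smul, hy0.ne']⟩
  have hscale : (star (((‖y‖⁻¹ : ℝ) : ℂ) • z) ⬝ᵥ (M t *ᵥ (((‖y‖⁻¹ : ℝ) : ℂ) • z))).re =
      (‖y‖ ^ 2)⁻¹ * (star z ⬝ᵥ (M t *ᵥ z)).re := by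
    rw [star_smul, smul_dotProduct, mulVec_smul, dotProduct_smul, smul_smul, smul_eq_mul,
      Complex.star_def, Complex.conj_ofReal, ← Complex.ofReal_mul, Complex.re_ofReal_mul]
    congr 1
    rw [← mul_inv, sq]
  change δ ≤ (star (((‖y‖⁻¹ : ℝ) : ℂ) • z) ⬝ᵥ (M t *ᵥ (((‖y‖⁻¹ : ℝ) : ℂ) • z))).re at key
  rw [hscale, inv_mul_eq_div, le_div_iff₀ (by positivity)] at key
  rwa [hnorm]

/-- The quadratic form of a spectral matrix at a vector of trigonometric sums, expanded. -/
lemma star_trigSum_dotProduct_mulVec {d p : ℕ} (M : Matrix (Fin p) (Fin p) ℂ) (n : Fin p → ℕ)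
    (v : ((k : Fin p) × Fin (n k)) → ℝ) (X : Fin p → ℕ → Fin d → ℝ) (f : Fin d → ℝ)
    (z : Fin p → ℂ) (hz : ∀ k, z k =
      ∑ i : Fin (n k), (v ⟨k, i⟩ : ℂ) * cexp (-(I * ((∑ t, f t * X k i t : ℝ) : ℂ)))) :
    star z ⬝ᵥ (M *ᵥ z) = ∑ a, ∑ b, ((v a * v b : ℝ) : ℂ) *
      (M a.1 b.1 * cexp (I * ((∑ t, f t * (X a.1 a.2 - X b.1 b.2) t : ℝ) : ℂ))) := by
  have hstar : ∀ k, star (z k) =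
      ∑ i : Fin (n k), (v ⟨k, i⟩ : ℂ) * cexp (I * ((∑ t, f t * X k i t : ℝ) : ℂ)) := by
    intro k
    rw [hz, Complex.star_def, map_sum]
    refine Finset.sum_congr rfl fun i _ => ?_
    rw [map_mul, ← Complex.exp_conj, map_neg, map_mul, Complex.conj_I, Complex.conj_ofReal,
      Complex.conj_ofReal, neg_mul, neg_neg]
  simp only [dotProduct, mulVec, Pi.star_apply, Fintype.sum_sigma]
  refine Finset.sum_congr rfl fun k _ => ?_
  rw [hstar, Finset.sum_mul]
  refine Finset.sum_congr rfl fun i _ => ?_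
  rw [Finset.mul_sum]
  refine Finset.sum_congr rfl fun l _ => ?_
  rw [hz, Finset.mul_sum, Finset.mul_sum]
  refine Finset.sum_congr rfl fun j _ => ?_
  have hexp : cexp (I * ((∑ t, f t * (X k i - X l j) t : ℝ) : ℂ)) =
      cexp (I * ((∑ t, f t * X k i t : ℝ) : ℂ)) *
        cexp (-(I * ((∑ t, f t * X l j t : ℝ) : ℂ))) := by
    rw [← Complex.exp_add]
    congr 1
    simp only [Pi.sub_apply, mul_sub, Finset.sum_sub_distrib, Complex.ofReal_sub]
    ring
  rw [hexp, Complex.ofReal_mul]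
  ring

/-- **Theorem 1 (Bachoc & Furrer).** Under a polynomial-decay bound on the covariance and
cross covariance functions, Fourier inversion, strict positive definiteness of the spectral
density matrix at every frequency, and a minimal-distance condition on the observation points
of each component, the smallest eigenvalue of the covariance matrix `Σ` is bounded away from
zero uniformly in the sample sizes `n₁, …, n_p`.  The smallest-eigenvalue bound is expressed
through the Rayleigh quotient: `ε * ‖v‖² ≤ vᵀ Σ v` for every real vector `v`. -/
theorem smallest_eigenvalue_covariance_matrix_bounded_away_from_zero
    (d p : ℕ) (hd : 1 ≤ d) (hp : 1 ≤ p)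
    (c : Fin p → Fin p → (Fin d → ℝ) → ℝ)
    (A τ : ℝ) (hτ : 0 < τ)
    (hdecay : ∀ k l (x : Fin d → ℝ), |c k l x| ≤ A / (1 + ‖x‖ ^ ((d : ℝ) + τ)))
    (chat : Fin p → Fin p → (Fin d → ℝ) → ℂ)
    (hchat : ∀ k l (f : Fin d → ℝ), chat k l f =
      ((2 * π : ℝ) ^ d : ℝ)⁻¹ •
        ∫ x : Fin d → ℝ, (c k l x : ℂ) *
          Complex.exp (-(Complex.I * ((∑ t, f t * x t : ℝ) : ℂ))))
    (hinv : ∀ k l (x : Fin d → ℝ), (c k l x : ℂ) =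
      ∫ f : Fin d → ℝ, chat k l f *
        Complex.exp (Complex.I * ((∑ t, f t * x t : ℝ) : ℂ)))
    (hherm : ∀ f : Fin d → ℝ, (Matrix.of fun k l => chat k l f).IsHermitian)
    (hpos : ∀ (f : Fin d → ℝ) (i : Fin p), 0 < (hherm f).eigenvalues i)
    (X : Fin p → ℕ → (Fin d → ℝ)) (Δ : ℝ) (hΔ : 0 < Δ)
    (hsep : ∀ (k : Fin p) (i j : ℕ), i ≠ j → Δ ≤ ‖X k i - X k j‖) :
    ∃ ε > 0, ∀ n : Fin p → ℕ, (∀ k, 1 ≤ n k) →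
      ∀ v : ((k : Fin p) × Fin (n k)) → ℝ,
        ε * ∑ a, v a ^ 2 ≤
          ∑ a, ∑ b, v a * c a.1 b.1 (X a.1 a.2 - X b.1 b.2) * v b := by
  have hinv_zero : ∀ k l, (∀ f, chat k l f = 0) → ∀ x, c k l x = 0 := fun k l h x => by
    simpa [h] using hinv k l x
  have hnorm_exp : ∀ r : ℝ, ‖cexp (I * (r : ℂ))‖ = 1 := fun r => by
    rw [mul_comm, Complex.norm_exp_ofReal_mul_I]
  have hnorm_exp_neg : ∀ r : ℝ, ‖cexp (-(I * (r : ℂ)))‖ = 1 := fun r => by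
    simpa using hnorm_exp (-r)
  have hint_iff : ∀ (F u : (Fin d → ℝ) → ℂ), Continuous u → (∀ x, ‖u x‖ = 1) →
      (Integrable (fun x => F x * u x) ↔ Integrable F) := by
    intro F u hu hu1
    have hmul : ∀ (G w : (Fin d → ℝ) → ℂ), Continuous w → (∀ x, ‖w x‖ = 1) → Integrable G →
        Integrable fun x => G x * w x := fun G w hw hw1 hG =>
      hG.mul_bdd hw.aestronglyMeasurable (ae_of_all _ fun x => (hw1 x).le)
    refine ⟨fun h => ?_, hmul F u hu hu1⟩
    have hne : ∀ x, u x ≠ 0 := fun x h0 => by simpa [h0] using hu1 x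
    simpa [mul_assoc, hne] using hmul _ (fun x => (u x)⁻¹) (hu.inv₀ hne)
      (fun x => by simp [hu1 x]) h
  -- If either function failed to be integrable, both would vanish identically.
  have hc_int : ∀ k l, Integrable fun x => (c k l x : ℂ) := by
    intro k l
    by_contra hni
    have h0 : ∀ f, chat k l f = 0 := fun f => by
      rw [hchat, integral_undef, smul_zero]
      rwa [hint_iff _ _ (by fun_prop) fun x => hnorm_exp_neg _]
    exact hni (by simp [hinv_zero k l h0])
  have hchat_int : ∀ k l, Integrable (chat k l) := by
    intro k l
    by_contra hni
    have h0 : ∀ x, (c k l x : ℂ) = 0 := fun x => by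
      rw [hinv, integral_undef]
      rwa [hint_iff _ _ (by fun_prop) fun f => hnorm_exp _]
    have h1 : chat k l = 0 := funext fun f => by simp [hchat, h0]
    exact hni (h1 ▸ integrable_zero _ _ _)
  have hchat_cont : ∀ k l, Continuous (chat k l) := by
    intro k l
    rw [show chat k l = _ from funext (hchat k l)]
    refine (continuous_of_dominated (bound := fun x => ‖(c k l x : ℂ)‖)
      (fun f => ?_) (fun f => ae_of_all _ fun x => ?_) (hc_int k l).norm
      (ae_of_all _ fun x => ?_)).fun_const_smul _
    rotate_left 2
    · fun_prop
    · exact ((hint_iff _ _ (by fun_prop) fun x => hnorm_exp_neg _).2 (hc_int k l)).1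
    · rw [norm_mul, hnorm_exp_neg, mul_one]
  let M : (Fin d → ℝ) → Matrix (Fin p) (Fin p) ℂ := fun f => Matrix.of fun k l => chat k l f
  have hM_cont : Continuous M := continuous_matrix fun k l => hchat_cont k l
  have hM_pos : ∀ f, (M f).PosDef := fun f => (hherm f).posDef_iff_eigenvalues_pos.2 (hpos f)
  obtain ⟨K, hK, κ, hκ, hlow⟩ := exists_isCompact_mul_sum_sq_le_integral_norm_trigSum_sq d hΔ
  obtain ⟨δ, hδ, hunif⟩ := hK.exists_mul_sum_norm_sq_le_re_dotProduct hM_cont hM_pos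
  refine ⟨δ * κ, mul_pos hδ hκ, fun n _ v => ?_⟩
  let z : (Fin d → ℝ) → Fin p → ℂ := fun f k =>
    ∑ i : Fin (n k), (v ⟨k, i⟩ : ℂ) * cexp (-(I * ((∑ t, f t * X k i t : ℝ) : ℂ)))
  have hz_cont : ∀ k, Continuous fun f => z f k := fun k => by fun_prop
  have hterm : ∀ a b : (k : Fin p) × Fin (n k), Integrable fun f => ((v a * v b : ℝ) : ℂ) *
      (chat a.1 b.1 f * cexp (I * ((∑ t, f t * (X a.1 a.2 - X b.1 b.2) t : ℝ) : ℂ))) :=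
    fun a b => ((hint_iff _ _ (by fun_prop) fun f => hnorm_exp _).2 (hchat_int _ _)).const_mul _
  have hexpand : (fun f => star (z f) ⬝ᵥ (M f *ᵥ z f)) = fun f => ∑ a, ∑ b,
      ((v a * v b : ℝ) : ℂ) * (chat a.1 b.1 f *
        cexp (I * ((∑ t, f t * (X a.1 a.2 - X b.1 b.2) t : ℝ) : ℂ))) :=
    funext fun f => star_trigSum_dotProduct_mulVec (M f) n v X f (z f) fun k => rfl
  have hq_int : Integrable fun f => star (z f) ⬝ᵥ (M f *ᵥ z f) := by
    rw [hexpand]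
    exact integrable_finsetSum _ fun a _ => integrable_finsetSum _ fun b _ => hterm a b
  have hq_eq : ∫ f, star (z f) ⬝ᵥ (M f *ᵥ z f) =
      ((∑ a, ∑ b, v a * c a.1 b.1 (X a.1 a.2 - X b.1 b.2) * v b : ℝ) : ℂ) := by
    rw [hexpand, integral_finsetSum _ fun a _ => integrable_finsetSum _ fun b _ => hterm a b,
      Complex.ofReal_sum]
    refine Finset.sum_congr rfl fun a _ => ?_
    rw [integral_finsetSum _ fun b _ => hterm a b, Complex.ofReal_sum]
    refine Finset.sum_congr rfl fun b _ => ?_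
    rw [integral_const_mul, ← hinv]
    push_cast
    ring
  have hz_int : ∀ k, IntegrableOn (fun f => ‖z f k‖ ^ 2) K := fun k =>
    ((hz_cont k).norm.pow 2).continuousOn.integrableOn_compact hK
  calc δ * κ * ∑ a, v a ^ 2 = δ * ∑ k, κ * ∑ i : Fin (n k), v ⟨k, i⟩ ^ 2 := by
        rw [Fintype.sum_sigma, ← Finset.mul_sum, mul_assoc]
    _ ≤ δ * ∑ k, ∫ f in K, ‖z f k‖ ^ 2 := by
        gcongr with k
        exact hlow _ (fun i => v ⟨k, i⟩) (fun i => X k i) fun i j hij =>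
          hsep k i j fun h => hij (Fin.ext h)
    _ = ∫ f in K, δ * ∑ k, ‖z f k‖ ^ 2 := by
        rw [integral_const_mul, integral_finsetSum _ fun k _ => hz_int k]
    _ ≤ ∫ f in K, (star (z f) ⬝ᵥ (M f *ᵥ z f)).re :=
        setIntegral_mono_on ((integrable_finsetSum _ fun k _ => hz_int k).const_mul δ)
          hq_int.re.integrableOn hK.measurableSet fun f hf => hunif f hf (z f)
    _ ≤ ∫ f, (star (z f) ⬝ᵥ (M f *ᵥ z f)).re :=
        setIntegral_le_integral hq_int.re
          (ae_of_all _ fun f => (hM_pos f).posSemidef.re_dotProduct_nonneg (z f))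
    _ = (∫ f, star (z f) ⬝ᵥ (M f *ᵥ z f)).re := integral_re hq_int
    _ = ∑ a, ∑ b, v a * c a.1 b.1 (X a.1 a.2 - X b.1 b.2) * v b := by
        rw [hq_eq, Complex.ofReal_re]
end

section
/- Let d ≥ 1, p ≥ 1, let Θ be a compact subset of ℝ^q, and let {c_{θ,kℓ}(h)}_{1≤k,ℓ≤p}, θ ∈ Θ, be a parametric family of matrix covariance functions. Assume: (i) there exist constants A < ∞ and τ > 0, independent of θ, such that |c_{θ,kℓ}(x)| ≤ A/(1 + |x|^{d+τ}) for all x ∈ ℝ^d, all k,ℓ and all θ ∈ Θ; (ii) for every θ ∈ Θ the Fourier inversion c_{θ,kℓ}(x) = ∫_{ℝ^d} ĉ_{θ,kℓ}(f) e^{i f·x} df holds for all x and all k,ℓ; (iii) the Hermitian matrix Ĉ_θ(f) = {ĉ_{θ,kℓ}(f)}_{1≤k,ℓ≤p} is jointly continuous in (f, θ) and λ₁(Ĉ_θ(f)) > 0 for all f ∈ ℝ^d and all θ ∈ Θ; (iv) there exists Δ > 0 such that for each k = 1,…,p the points (x^{(k)}_i)_{i ∈ ℕ⁺} in ℝ^d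 satisfy |x^{(k)}_i − x^{(k)}_j| ≥ Δ whenever i ≠ j. Then, with Σ_θ the N × N covariance matrix whose entry at row N_{k−1}+i and column N_{ℓ−1}+j equals c_{θ,kℓ}(x^{(k)}_i − x^{(ℓ)}_j), one has inf over all θ ∈ Θ and all n₁,…,n_p ∈ ℕ⁺ of λ₁(Σ_θ) > 0. -/
open MeasureTheory Matrix Complex Filter
open scoped BigOperators Real

section Minorant

open scoped FourierTransform LineDeriv SchwartzMap

/-- The squared modulus of the Fourier transform of a Schwartz function supported in a ball of
radius `r` has a Fourier transform that vanishes outside the ball of radius `2 * r`. -/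
lemma SchwartzMap.integral_norm_sq_fourier_mul_exp_eq_zero {V : Type*} [NormedAddCommGroup V]
    [InnerProductSpace ℝ V] [FiniteDimensional ℝ V] [MeasurableSpace V] [BorelSpace V]
    (g : 𝓢(V, ℂ)) {r : ℝ} (hg : ∀ x, r < ‖x‖ → g x = 0) {y : V} (hy : 2 * r < ‖y‖) :
    ∫ ξ, ((‖𝓕 g ξ‖ ^ 2 : ℝ) : ℂ) * Complex.exp (2 * π * Complex.I * (inner ℝ ξ y : ℝ)) = 0 := by
  set g' : 𝓢(V, ℂ) := SchwartzMap.compSubConstCLM ℂ (-y) g with hg'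
  have hF : ∀ ξ, 𝓕 g' ξ = Complex.exp (2 * π * Complex.I * (inner ℝ ξ y : ℝ)) * 𝓕 g ξ := by
    intro ξ
    have h1 := congrFun (VectorFourier.fourierIntegral_comp_add_right Real.fourierChar
      (volume : Measure V) (innerₗ V) (g : V → ℂ) y) ξ
    have h2 : (g' : V → ℂ) = (g : V → ℂ) ∘ fun v ↦ v + y := by
      ext v; simp [hg']
    rw [SchwartzMap.fourier_coe, SchwartzMap.fourier_coe, h2]
    refine h1.trans ?_
    rw [Circle.smul_def, Real.fourierChar_apply, smul_eq_mul, innerₗ_apply_apply,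
      real_inner_comm]
    congr 2
    push_cast
    ring
  have hP := SchwartzMap.integral_inner_fourier_fourier g g'
  have hz : ∀ x, inner ℂ (g x) (g' x) = 0 := by
    intro x
    by_cases hx : r < ‖x‖
    · simp [hg x hx]
    · have : g' x = 0 := by
        simp only [hg', SchwartzMap.compSubConstCLM_apply, sub_neg_eq_add]
        apply hg
        have := norm_sub_le (x + y) x
        simp only [add_sub_cancel_left] at this
        linarith
      simp [this]
  simp only [hz, integral_zero] at hP
  rw [← hP]
  congr 1
  ext ξ
  rw [hF, RCLike.inner_apply, mul_assoc (Complex.exp _), Complex.mul_conj,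
    Complex.normSq_eq_norm_sq, mul_comm]

lemma SchwartzMap.lineDerivOp_apply_eq_zero_of_forall_norm_gt {V : Type*} [NormedAddCommGroup V]
    [InnerProductSpace ℝ V]
    (g : 𝓢(V, ℂ)) {r : ℝ} (hg : ∀ x, r < ‖x‖ → g x = 0) (m x : V) (hx : r < ‖x‖) :
    (∂_{m} g : 𝓢(V, ℂ)) x = 0 := by
  rw [SchwartzMap.lineDerivOp_apply_eq_fderiv]
  have : (g : V → ℂ) =ᶠ[nhds x] fun _ => 0 := by
    filter_upwards [(isOpen_lt continuous_const continuous_norm).mem_nhds hx] with z hz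
    exact hg z hz
  rw [this.fderiv_eq]
  simp

lemma SchwartzMap.norm_sq_fourier_lineDerivOp {V : Type*} [NormedAddCommGroup V]
    [InnerProductSpace ℝ V] [FiniteDimensional ℝ V] [MeasurableSpace V] [BorelSpace V]
    (g : 𝓢(V, ℂ)) (m ξ : V) :
    ‖𝓕 (∂_{m} g) ξ‖ ^ 2 = (2 * π) ^ 2 * (inner ℝ ξ m) ^ 2 * ‖𝓕 g ξ‖ ^ 2 := by
  have : (fun x : V => inner ℝ x m).HasTemperateGrowth := by fun_prop
  rw [SchwartzMap.fourier_lineDerivOp_eq]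
  simp [this, mul_pow, SchwartzMap.smulLeftCLM_apply_apply]
  ring

lemma SchwartzMap.integrable_norm_sq {V : Type*} [NormedAddCommGroup V]
    [InnerProductSpace ℝ V] [FiniteDimensional ℝ V] [MeasurableSpace V] [BorelSpace V]
    (g : 𝓢(V, ℂ)) : Integrable fun x => ‖g x‖ ^ 2 :=
  (g.memLp 2).integrable_norm_pow (by norm_num)

lemma SchwartzMap.exists_supported_integral_norm_sq_pos {V : Type*} [NormedAddCommGroup V]
    [InnerProductSpace ℝ V] [FiniteDimensional ℝ V] [MeasurableSpace V] [BorelSpace V]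
    {r : ℝ} (hr : 0 < r) :
    ∃ g : 𝓢(V, ℂ), (∀ x, r < ‖x‖ → g x = 0) ∧ 0 < ∫ x, ‖g x‖ ^ 2 := by
  let b : ContDiffBump (0 : V) := ⟨r / 2, r, by positivity, by linarith⟩
  have hs : HasCompactSupport (fun x => (b x : ℂ)) :=
    b.hasCompactSupport.comp_left (g := fun t : ℝ => (t : ℂ)) (by simp)
  have hc : ContDiff ℝ (⊤ : ℕ∞) (fun x => (b x : ℂ)) := Complex.ofRealCLM.contDiff.comp b.contDiff
  let g : 𝓢(V, ℂ) := hs.toSchwartzMap hc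
  have hgb : ∀ x, g x = (b x : ℂ) := fun x => rfl
  refine ⟨g, fun x hx => ?_, ?_⟩
  · rw [hgb, b.zero_of_le_dist (by simpa [b] using hx.le)]
    simp
  · refine Continuous.integral_pos_of_hasCompactSupport_nonneg_nonzero (x := 0) (by fun_prop) ?_
      (fun x => by positivity) ?_
    · exact hs.comp_left (g := fun z : ℂ => ‖z‖ ^ 2) (by simp)
    · rw [hgb, b.one_of_mem_closedBall (by simp; positivity)]
      simp

/-- A band-limited minorant: an integrable function with positive integral which is bounded above,
nonpositive outside a ball, and whose Fourier transform vanishes outside the ball of radius `Δ`. -/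
lemma exists_bandlimited_minorant (V : Type*) [NormedAddCommGroup V]
    [InnerProductSpace ℝ V] [FiniteDimensional ℝ V] [MeasurableSpace V] [BorelSpace V]
    {Δ : ℝ} (hΔ : 0 < Δ) :
    ∃ (w : V → ℝ) (C R : ℝ), Integrable w ∧ 0 < C ∧ (∀ ξ, w ξ ≤ C) ∧
      (∀ ξ, R ≤ ‖ξ‖ → w ξ ≤ 0) ∧ 0 < ∫ ξ, w ξ ∧
      ∀ y : V, Δ ≤ ‖y‖ →
        ∫ ξ, (w ξ : ℂ) * Complex.exp (2 * π * Complex.I * (inner ℝ ξ y : ℝ)) = 0 := by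
  obtain ⟨g, hg, hpos⟩ :=
    SchwartzMap.exists_supported_integral_norm_sq_pos (V := V) (r := Δ / 3) (by positivity)
  let e := stdOrthonormalBasis ℝ V
  let D : Fin (Module.finrank ℝ V) → 𝓢(V, ℂ) := fun t => ∂_{e t} g
  have hD : ∀ t x, Δ / 3 < ‖x‖ → D t x = 0 := fun t x hx =>
    SchwartzMap.lineDerivOp_apply_eq_zero_of_forall_norm_gt g hg (e t) x hx
  set S : ℝ := ∑ t, ∫ x, ‖D t x‖ ^ 2 with hS
  set G : ℝ := ∫ x, ‖g x‖ ^ 2 with hG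
  have hS0 : 0 ≤ S := Finset.sum_nonneg fun t _ => integral_nonneg fun x => by positivity
  have hL : ∃ L : ℝ, 1 ≤ L ∧ S < L * G := by
    refine ⟨S / G + 1, le_add_of_nonneg_left (div_nonneg hS0 hpos.le), ?_⟩
    rw [add_mul, div_mul_cancel₀ _ hpos.ne', one_mul]
    exact lt_add_of_pos_right _ hpos
  obtain ⟨L, hL1, hLG⟩ := hL
  let w : V → ℝ := fun ξ => L * ‖𝓕 g ξ‖ ^ 2 - ∑ t, ‖𝓕 (D t) ξ‖ ^ 2
  have hw : ∀ ξ, w ξ = (L - (2 * π) ^ 2 * ‖ξ‖ ^ 2) * ‖𝓕 g ξ‖ ^ 2 := by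
    intro ξ
    simp only [w, D, SchwartzMap.norm_sq_fourier_lineDerivOp]
    rw [← Finset.sum_mul, ← Finset.mul_sum, e.sum_sq_inner_left]
    ring
  have hig : Integrable fun ξ => L * ‖𝓕 g ξ‖ ^ 2 :=
    (SchwartzMap.integrable_norm_sq (𝓕 g)).const_mul _
  have hiD : ∀ t, Integrable fun ξ => ‖𝓕 (D t) ξ‖ ^ 2 := fun t => SchwartzMap.integrable_norm_sq _
  have hiw : Integrable w := hig.sub (integrable_finsetSum _ fun t _ => hiD t)
  obtain ⟨B, hB⟩ : ∃ B : ℝ, ∀ ξ, ‖𝓕 g ξ‖ ≤ B :=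
    ⟨_, (𝓕 g).toBoundedContinuousFunction.norm_coe_le_norm⟩
  refine ⟨w, L * B ^ 2 + 1, L, hiw, by positivity, fun ξ => ?_, fun ξ hξ => ?_, ?_, fun y hy => ?_⟩
  · have h1 : ∑ t, ‖𝓕 (D t) ξ‖ ^ 2 ≥ 0 := by positivity
    have h2 : ‖𝓕 g ξ‖ ^ 2 ≤ B ^ 2 := by gcongr; exact hB ξ
    have h3 : L * ‖𝓕 g ξ‖ ^ 2 ≤ L * B ^ 2 := by gcongr
    simp only [w]
    linarith
  · rw [hw]
    refine mul_nonpos_of_nonpos_of_nonneg ?_ (by positivity)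
    have hπ := Real.pi_gt_three
    have h1 : L ^ 2 ≤ ‖ξ‖ ^ 2 := by gcongr
    have h2 : 1 ≤ (2 * π) ^ 2 := one_le_pow₀ (by linarith)
    have h3 : ‖ξ‖ ^ 2 ≤ (2 * π) ^ 2 * ‖ξ‖ ^ 2 := le_mul_of_one_le_left (by positivity) h2
    nlinarith
  · have : ∫ ξ, w ξ = L * G - S := by
      simp only [w]
      rw [integral_sub hig (integrable_finsetSum _ fun t _ => hiD t),
        integral_finsetSum _ fun t _ => hiD t, integral_const_mul]
      simp only [SchwartzMap.integral_norm_sq_fourier, hG, hS]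
    linarith
  · have hexp : Continuous fun ξ : V => Complex.exp (2 * π * Complex.I * (inner ℝ ξ y : ℝ)) := by
      fun_prop
    have hnorm : ∀ ξ : V, ‖Complex.exp (2 * π * Complex.I * (inner ℝ ξ y : ℝ))‖ ≤ 1 := by
      intro ξ
      simp [Complex.norm_exp]
    have hI : ∀ h : 𝓢(V, ℂ), Integrable fun ξ => ((‖𝓕 h ξ‖ ^ 2 : ℝ) : ℂ) *
        Complex.exp (2 * π * Complex.I * (inner ℝ ξ y : ℝ)) := fun h =>
      (SchwartzMap.integrable_norm_sq (𝓕 h)).ofReal.mul_bdd (c := 1) hexp.aestronglyMeasurable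
        (ae_of_all _ hnorm)
    have hy' : 2 * (Δ / 3) < ‖y‖ := by linarith
    have : ∀ ξ, (w ξ : ℂ) * Complex.exp (2 * π * Complex.I * (inner ℝ ξ y : ℝ)) =
        (L : ℂ) * (((‖𝓕 g ξ‖ ^ 2 : ℝ) : ℂ) *
          Complex.exp (2 * π * Complex.I * (inner ℝ ξ y : ℝ))) -
        ∑ t, ((‖𝓕 (D t) ξ‖ ^ 2 : ℝ) : ℂ) *
          Complex.exp (2 * π * Complex.I * (inner ℝ ξ y : ℝ)) := by
      intro ξ
      simp only [w, Complex.ofReal_sub, Complex.ofReal_sum, Complex.ofReal_mul, sub_mul,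
        Finset.sum_mul, mul_assoc]
    simp only [this]
    rw [integral_sub ((hI g).const_mul _) (integrable_finsetSum _ fun t _ => hI (D t)),
      integral_finsetSum _ fun t _ => hI (D t), integral_const_mul,
      SchwartzMap.integral_norm_sq_fourier_mul_exp_eq_zero g hg hy']
    rw [Finset.sum_eq_zero fun t _ =>
      SchwartzMap.integral_norm_sq_fourier_mul_exp_eq_zero (D t) (hD t) hy']
    simp

/-- The band-limited minorant on `Fin d → ℝ` with the supremum norm and phases `exp (i f·x)`. -/
lemma exists_bandlimited_minorant_pi (d : ℕ) {Δ : ℝ} (hΔ : 0 < Δ) :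
    ∃ (w : (Fin d → ℝ) → ℝ) (C R : ℝ), Integrable w ∧ 0 < C ∧ (∀ f, w f ≤ C) ∧
      (∀ f, R ≤ ‖f‖ → w f ≤ 0) ∧ 0 < ∫ f, w f ∧
      ∀ x : Fin d → ℝ, Δ ≤ ‖x‖ →
        ∫ f, (w f : ℂ) * Complex.exp (Complex.I * ((∑ t, f t * x t : ℝ) : ℂ)) = 0 := by
  obtain ⟨w, C, R, hi, hC, hwC, hwR, hpos, hz⟩ :=
    exists_bandlimited_minorant (EuclideanSpace ℝ (Fin d)) (Δ := Δ / (2 * π)) (by positivity)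
  have hsup : ∀ f : Fin d → ℝ, ‖f‖ ≤ ‖WithLp.toLp 2 f‖ := fun f => by
    refine (pi_norm_le_iff_of_nonneg (norm_nonneg _)).2 fun t => ?_
    exact PiLp.norm_apply_le (WithLp.toLp 2 f) t
  have hmp := PiLp.volume_preserving_toLp (Fin d)
  have hemb := (MeasurableEquiv.toLp 2 (Fin d → ℝ)).measurableEmbedding
  refine ⟨fun f => w (WithLp.toLp 2 f), C, R, (hmp.integrable_comp_emb hemb).2 hi, hC,
    fun f => hwC _, fun f hf => hwR _ (hf.trans (hsup f)), ?_, fun x hx => ?_⟩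
  · rwa [hmp.integral_comp hemb w]
  · rw [← hz (WithLp.toLp 2 ((2 * π)⁻¹ • x)), ← hmp.integral_comp hemb]
    · congr 1
      ext f
      congr 2
      have : inner ℝ (WithLp.toLp 2 f) (WithLp.toLp 2 ((2 * π)⁻¹ • x)) =
          (2 * π)⁻¹ * ∑ t, f t * x t := by
        simp only [PiLp.inner_apply, Finset.mul_sum]
        refine Finset.sum_congr rfl fun t _ => ?_
        simp
        ring
      rw [this]
      push_cast
      field_simp
    · rw [WithLp.toLp_smul, norm_smul, Real.norm_of_nonneg (by positivity), div_eq_inv_mul]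
      gcongr
      exact hx.trans (hsup x)

end Minorant

/-- A continuous family of positive definite matrices over a compact set is uniformly bounded
below. -/
lemma exists_uniform_lower_bound_of_pos {T : Type*} [TopologicalSpace T] {p : ℕ} {K : Set T}
    (hK : IsCompact K) {M : T → Matrix (Fin p) (Fin p) ℂ} (hM : ContinuousOn M K)
    (hpd : ∀ t ∈ K, ∀ z : Fin p → ℂ, z ≠ 0 → 0 < (star z ⬝ᵥ M t *ᵥ z).re) :
    ∃ δ > 0, ∀ t ∈ K, ∀ z : Fin p → ℂ, δ * ∑ k, ‖z k‖ ^ 2 ≤ (star z ⬝ᵥ M t *ᵥ z).re := by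
  have hcpt := hK.prod (isCompact_sphere (0 : EuclideanSpace ℂ (Fin p)) 1)
  have hcont : ContinuousOn
      (fun tz : T × EuclideanSpace ℂ (Fin p) => (star tz.2.ofLp ⬝ᵥ M tz.1 *ᵥ tz.2.ofLp).re)
      (K ×ˢ Metric.sphere 0 1) := by
    have h1 : ContinuousOn (fun tz : T × EuclideanSpace ℂ (Fin p) => M tz.1)
        (K ×ˢ Metric.sphere 0 1) := hM.comp continuousOn_fst fun x hx => hx.1
    have h2 : ∀ i j, ContinuousOn (fun tz : T × EuclideanSpace ℂ (Fin p) => M tz.1 i j)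
        (K ×ˢ Metric.sphere 0 1) := fun i j =>
      (continuous_id.matrix_elem i j).comp_continuousOn h1
    have h3 : ∀ i, Continuous fun tz : T × EuclideanSpace ℂ (Fin p) => tz.2 i := fun i =>
      (PiLp.continuous_apply 2 _ i).comp continuous_snd
    refine Complex.continuous_re.comp_continuousOn (continuousOn_finsetSum _ fun i _ => ?_)
    refine ContinuousOn.fun_mul (continuous_star.comp (h3 i)).continuousOn ?_
    simp only [mulVec, dotProduct]
    exact continuousOn_finsetSum _ fun j _ => (h2 i j).fun_mul (h3 j).continuousOn
  obtain ⟨δ, hδ, hle⟩ := hcpt.exists_forall_le' hcont (a := 0) (by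
    rintro ⟨t, z⟩ ⟨ht, hz⟩
    refine hpd t ht _ fun h => ?_
    have : z = 0 := by ext i; exact congrFun h i
    simp [this] at hz)
  refine ⟨δ, hδ, fun t ht z => ?_⟩
  obtain ⟨u, rfl⟩ : ∃ u : EuclideanSpace ℂ (Fin p), u.ofLp = z := ⟨WithLp.toLp 2 z, rfl⟩
  rw [← EuclideanSpace.norm_sq_eq u]
  rcases eq_or_ne u 0 with rfl | h0
  · simp
  · have hu0 : ‖u‖ ≠ 0 := norm_ne_zero_iff.2 h0
    have h := hle (t, ((‖u‖⁻¹ : ℝ) : ℂ) • u) ⟨ht, by simp [norm_smul, hu0]⟩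
    simp only [WithLp.ofLp_smul, star_smul, smul_dotProduct, mulVec_smul, dotProduct_smul,
      smul_eq_mul] at h
    rw [RCLike.star_def, Complex.conj_ofReal, Complex.re_ofReal_mul, Complex.re_ofReal_mul] at h
    calc δ * ‖u‖ ^ 2 ≤ (‖u‖⁻¹ * (‖u‖⁻¹ * (star u.ofLp ⬝ᵥ M t *ᵥ u.ofLp).re)) * ‖u‖ ^ 2 := by
          gcongr
      _ = _ := by field_simp

open scoped ComplexOrder in
lemma re_dotProduct_pos_of_eigenvalues_pos {p : ℕ} {M : Matrix (Fin p) (Fin p) ℂ}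
    (hM : M.IsHermitian) (hpos : ∀ i, 0 < hM.eigenvalues i) {z : Fin p → ℂ} (hz : z ≠ 0) :
    0 < (star z ⬝ᵥ M *ᵥ z).re :=
  (hM.posDef_iff_eigenvalues_pos.2 hpos).re_dotProduct_pos hz

/-- The value at `f` of the Fourier transform of a signed point measure in each component. -/
noncomputable def phaseSum {d p : ℕ} {n : Fin p → ℕ} (X : Fin p → ℕ → (Fin d → ℝ))
    (v : ((k : Fin p) × Fin (n k)) → ℝ) (f : Fin d → ℝ) (k : Fin p) : ℂ :=
  ∑ j : Fin (n k), (v ⟨k, j⟩ : ℂ) *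
    Complex.exp (-(Complex.I * ((∑ t, f t * X k j t : ℝ) : ℂ)))

lemma phaseSum_quadratic_form {d p : ℕ} {n : Fin p → ℕ} (X : Fin p → ℕ → (Fin d → ℝ))
    (v : ((k : Fin p) × Fin (n k)) → ℝ) (f : Fin d → ℝ) (M : Matrix (Fin p) (Fin p) ℂ) :
    star (phaseSum X v f) ⬝ᵥ M *ᵥ phaseSum X v f =
      ∑ a, ∑ b, ((v a * v b : ℝ) : ℂ) * (M a.1 b.1 *
        Complex.exp (Complex.I *
          ((∑ t, f t * (X a.1 a.2 - X b.1 b.2) t : ℝ) : ℂ))) := by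
  simp only [dotProduct, mulVec, Pi.star_apply, phaseSum, Fintype.sum_sigma, star_sum,
    Finset.sum_mul]
  simp only [Finset.mul_sum]
  refine Finset.sum_congr rfl fun k _ => Finset.sum_congr rfl fun i _ =>
    Finset.sum_congr rfl fun l _ => Finset.sum_congr rfl fun j _ => ?_
  have h : Complex.exp (Complex.I * ((∑ t, f t * (X k i - X l j) t : ℝ) : ℂ)) =
      Complex.exp (Complex.I * ((∑ t, f t * X k i t : ℝ) : ℂ)) *
        Complex.exp (-(Complex.I * ((∑ t, f t * X l j t : ℝ) : ℂ))) := by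
    rw [← Complex.exp_add]
    congr 1
    simp only [Pi.sub_apply, mul_sub, Finset.sum_sub_distrib, Complex.ofReal_sub]
    ring
  have hstar : star ((v ⟨k, i⟩ : ℂ) *
      Complex.exp (-(Complex.I * ((∑ t, f t * X k i t : ℝ) : ℂ)))) =
      (v ⟨k, i⟩ : ℂ) * Complex.exp (Complex.I * ((∑ t, f t * X k i t : ℝ) : ℂ)) := by
    rw [RCLike.star_def, map_mul, Complex.conj_ofReal, ← Complex.exp_conj, map_neg, map_mul,
      Complex.conj_I, Complex.conj_ofReal, neg_mul, neg_neg]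
  rw [h, hstar, Complex.ofReal_mul]
  ring

lemma norm_exp_phase {d : ℕ} (f x : Fin d → ℝ) :
    ‖Complex.exp (Complex.I * ((∑ t, f t * x t : ℝ) : ℂ))‖ = 1 := by
  rw [mul_comm, Complex.norm_exp_ofReal_mul_I]

lemma continuous_exp_phase {d : ℕ} (x : Fin d → ℝ) :
    Continuous fun f : Fin d → ℝ => Complex.exp (Complex.I * ((∑ t, f t * x t : ℝ) : ℂ)) := by
  fun_prop

lemma integrable_mul_exp_phase_iff {d : ℕ} {g : (Fin d → ℝ) → ℂ} (x : Fin d → ℝ) :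
    Integrable (fun f => g f * Complex.exp (Complex.I * ((∑ t, f t * x t : ℝ) : ℂ))) ↔
      Integrable g := by
  have key : ∀ (h : (Fin d → ℝ) → ℂ) (y : Fin d → ℝ), Integrable h →
      Integrable fun f => h f * Complex.exp (Complex.I * ((∑ t, f t * y t : ℝ) : ℂ)) :=
    fun h y hh => hh.mul_bdd (c := 1) (continuous_exp_phase y).aestronglyMeasurable
      (ae_of_all _ fun f => (norm_exp_phase f y).le)
  refine ⟨fun h => ?_, key g x⟩
  refine (key _ (-x) h).congr (ae_of_all _ fun f => ?_)
  simp only [mul_assoc, ← Complex.exp_add, ← mul_add, ← Complex.ofReal_add,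
    ← Finset.sum_add_distrib, Pi.neg_apply]
  simp

/-- Orthogonality of the phases at separated points against a band-limited weight. -/
lemma integral_mul_sum_norm_sq_phaseSum {d p : ℕ} {n : Fin p → ℕ} {w : (Fin d → ℝ) → ℝ} {Δ : ℝ}
    (hiw : Integrable w)
    (hwz : ∀ x : Fin d → ℝ, Δ ≤ ‖x‖ →
      ∫ f, (w f : ℂ) * Complex.exp (Complex.I * ((∑ t, f t * x t : ℝ) : ℂ)) = 0)
    (X : Fin p → ℕ → (Fin d → ℝ))
    (hsep : ∀ (k : Fin p) (i j : ℕ), i ≠ j → Δ ≤ ‖X k i - X k j‖)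
    (v : ((k : Fin p) × Fin (n k)) → ℝ) :
    (Integrable fun f => w f * ∑ k, ‖phaseSum X v f k‖ ^ 2) ∧
      ∫ f, w f * ∑ k, ‖phaseSum X v f k‖ ^ 2 = (∫ f, w f) * ∑ a, v a ^ 2 := by
  have hform : ∀ f, ((w f * ∑ k, ‖phaseSum X v f k‖ ^ 2 : ℝ) : ℂ) =
      ∑ a, ∑ b, ((v a * v b : ℝ) : ℂ) * (1 : Matrix (Fin p) (Fin p) ℂ) a.1 b.1 * ((w f : ℂ) *
        Complex.exp (Complex.I *
          ((∑ t, f t * (X a.1 a.2 - X b.1 b.2) t : ℝ) : ℂ))) := by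
    intro f
    have h : ((∑ k, ‖phaseSum X v f k‖ ^ 2 : ℝ) : ℂ) =
        star (phaseSum X v f) ⬝ᵥ (1 : Matrix (Fin p) (Fin p) ℂ) *ᵥ phaseSum X v f := by
      rw [one_mulVec, dotProduct, Complex.ofReal_sum]
      refine Finset.sum_congr rfl fun k _ => ?_
      rw [Pi.star_apply, RCLike.star_def, mul_comm, Complex.mul_conj, Complex.normSq_eq_norm_sq]
    rw [Complex.ofReal_mul, h, phaseSum_quadratic_form, Finset.mul_sum]
    refine Finset.sum_congr rfl fun a _ => ?_
    rw [Finset.mul_sum]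
    refine Finset.sum_congr rfl fun b _ => ?_
    ring
  have hterm : ∀ a b : (k : Fin p) × Fin (n k), Integrable fun f => ((v a * v b : ℝ) : ℂ) *
      (1 : Matrix (Fin p) (Fin p) ℂ) a.1 b.1 * ((w f : ℂ) * Complex.exp (Complex.I *
        ((∑ t, f t * (X a.1 a.2 - X b.1 b.2) t : ℝ) : ℂ))) := fun a b =>
    ((integrable_mul_exp_phase_iff _).2 hiw.ofReal).const_mul _
  have hint : Integrable fun f => ((w f * ∑ k, ‖phaseSum X v f k‖ ^ 2 : ℝ) : ℂ) := by
    simp only [hform]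
    exact integrable_finsetSum _ fun a _ => integrable_finsetSum _ fun b _ => hterm a b
  refine ⟨hint.re, Complex.ofReal_injective ?_⟩
  rw [← integral_complex_ofReal]
  simp only [hform]
  rw [integral_finsetSum _ fun a _ => integrable_finsetSum _ fun b _ => hterm a b,
    Finset.mul_sum, Complex.ofReal_sum]
  refine Finset.sum_congr rfl fun a _ => ?_
  rw [integral_finsetSum _ fun b _ => hterm a b, Finset.sum_eq_single a]
  · rw [integral_const_mul]
    simp only [sub_self, Pi.zero_apply, mul_zero, Finset.sum_const_zero, Complex.ofReal_zero,
      Complex.exp_zero, mul_one, one_apply_eq, integral_complex_ofReal]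
    push_cast
    ring
  · intro b _ hba
    rw [integral_const_mul]
    obtain ⟨k, i⟩ := a
    obtain ⟨l, j⟩ := b
    by_cases hkl : k = l
    · subst hkl
      rw [hwz _ (hsep k i j fun hij => hba ?_), mul_zero]
      rw [Fin.ext hij]
    · simp [one_apply_ne hkl]
  · simp

/-- **Theorem 2 (Bachoc & Furrer).** Uniform version of the smallest-eigenvalue lower bound
over a parametric family `{c_{θ,kℓ}}`, `θ` in a compact set `Θ ⊆ ℝ^q`: under a decay bound
uniform in `θ`, Fourier inversion for every `θ`, joint continuity of the spectral density
matrix `Ĉ_θ(f)` in `(f, θ)` with strictly positive smallest eigenvalue everywhere, and the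
minimal-distance condition on the observation points, the smallest eigenvalue of `Σ_θ` is
bounded away from zero uniformly in `θ ∈ Θ` and in the sample sizes `n₁, …, n_p`. -/
theorem smallest_eigenvalue_covariance_matrix_bounded_uniformly_in_parameter
    (d p q : ℕ) (hd : 1 ≤ d) (hp : 1 ≤ p)
    (Θ : Set (Fin q → ℝ)) (hΘ : IsCompact Θ)
    (c : (Fin q → ℝ) → Fin p → Fin p → (Fin d → ℝ) → ℝ)
    (A τ : ℝ) (hτ : 0 < τ)
    (hdecay : ∀ θ ∈ Θ, ∀ k l (x : Fin d → ℝ),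
      |c θ k l x| ≤ A / (1 + ‖x‖ ^ ((d : ℝ) + τ)))
    (chat : (Fin q → ℝ) → Fin p → Fin p → (Fin d → ℝ) → ℂ)
    (hchat : ∀ θ ∈ Θ, ∀ k l (f : Fin d → ℝ), chat θ k l f =
      ((2 * π : ℝ) ^ d : ℝ)⁻¹ •
        ∫ x : Fin d → ℝ, (c θ k l x : ℂ) *
          Complex.exp (-(Complex.I * ((∑ t, f t * x t : ℝ) : ℂ))))
    (hinv : ∀ θ ∈ Θ, ∀ k l (x : Fin d → ℝ), (c θ k l x : ℂ) =
      ∫ f : Fin d → ℝ, chat θ k l f *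
        Complex.exp (Complex.I * ((∑ t, f t * x t : ℝ) : ℂ)))
    (hcont : ContinuousOn
      (fun fθ : (Fin d → ℝ) × (Fin q → ℝ) => Matrix.of fun k l => chat fθ.2 k l fθ.1)
      (Set.univ ×ˢ Θ))
    (hherm : ∀ θ ∈ Θ, ∀ f : Fin d → ℝ, (Matrix.of fun k l => chat θ k l f).IsHermitian)
    (hpos : ∀ θ, ∀ hθ : θ ∈ Θ, ∀ (f : Fin d → ℝ) (i : Fin p),
      0 < (hherm θ hθ f).eigenvalues i)
    (X : Fin p → ℕ → (Fin d → ℝ)) (Δ : ℝ) (hΔ : 0 < Δ)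
    (hsep : ∀ (k : Fin p) (i j : ℕ), i ≠ j → Δ ≤ ‖X k i - X k j‖) :
    ∃ ε > 0, ∀ θ ∈ Θ, ∀ n : Fin p → ℕ, (∀ k, 1 ≤ n k) →
      ∀ v : ((k : Fin p) × Fin (n k)) → ℝ,
        ε * ∑ a, v a ^ 2 ≤
          ∑ a, ∑ b, v a * c θ a.1 b.1 (X a.1 a.2 - X b.1 b.2) * v b := by
  obtain ⟨w, C, R, hiw, hC, hwC, hwR, hw0, hwz⟩ := exists_bandlimited_minorant_pi d hΔ
  have hquad : ∀ θ ∈ Θ, ∀ f : Fin d → ℝ, ∀ z : Fin p → ℂ, z ≠ 0 →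
      0 < (star z ⬝ᵥ (Matrix.of fun k l => chat θ k l f) *ᵥ z).re := fun θ hθ f z hz =>
    re_dotProduct_pos_of_eigenvalues_pos (hherm θ hθ f) (hpos θ hθ f) hz
  obtain ⟨δ, hδ, hδle⟩ := exists_uniform_lower_bound_of_pos
    ((isCompact_closedBall (0 : Fin d → ℝ) R).prod hΘ)
    (hcont.mono (Set.prod_mono (Set.subset_univ _) subset_rfl))
    (fun t ht z hz => hquad t.2 ht.2 t.1 z hz)
  have hbound : ∀ θ ∈ Θ, ∀ (f : Fin d → ℝ) (z : Fin p → ℂ),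
      δ / C * (w f * ∑ k, ‖z k‖ ^ 2) ≤
        (star z ⬝ᵥ (Matrix.of fun k l => chat θ k l f) *ᵥ z).re := by
    intro θ hθ f z
    have hz0 : 0 ≤ ∑ k, ‖z k‖ ^ 2 := by positivity
    by_cases hf : ‖f‖ ≤ R
    · refine le_trans ?_ (hδle (f, θ) ⟨by simpa using hf, hθ⟩ z)
      calc δ / C * (w f * ∑ k, ‖z k‖ ^ 2) ≤ δ / C * (C * ∑ k, ‖z k‖ ^ 2) := by
            gcongr
            exact hwC f
        _ = _ := by field_simp
    · have h1 : δ / C * (w f * ∑ k, ‖z k‖ ^ 2) ≤ 0 :=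
        mul_nonpos_of_nonneg_of_nonpos (by positivity)
          (mul_nonpos_of_nonpos_of_nonneg (hwR f (not_le.1 hf).le) hz0)
      refine h1.trans ?_
      rcases eq_or_ne z 0 with rfl | hz
      · simp
      · exact (hquad θ hθ f z hz).le
  have hichat : ∀ θ ∈ Θ, ∀ k l, Integrable (chat θ k l) := by
    intro θ hθ k l
    by_contra hni
    have hc : ∀ x, (c θ k l x : ℂ) = 0 := fun x => by
      rw [hinv θ hθ]
      exact integral_undef fun h => hni ((integrable_mul_exp_phase_iff x).1 h)
    refine hni ?_
    have : chat θ k l = fun _ => 0 := by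
      ext f
      rw [hchat θ hθ]
      simp [hc]
    rw [this]
    exact integrable_zero _ _ _
  refine ⟨δ / C * ∫ f, w f, by positivity, fun θ hθ n _ v => ?_⟩
  have hterm : ∀ a b : (k : Fin p) × Fin (n k), Integrable fun f => ((v a * v b : ℝ) : ℂ) *
      (chat θ a.1 b.1 f * Complex.exp (Complex.I *
        ((∑ t, f t * (X a.1 a.2 - X b.1 b.2) t : ℝ) : ℂ))) := fun a b =>
    ((integrable_mul_exp_phase_iff _).2 (hichat θ hθ a.1 b.1)).const_mul _
  have hint : Integrable fun f => star (phaseSum X v f) ⬝ᵥ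
      (Matrix.of fun k l => chat θ k l f) *ᵥ phaseSum X v f := by
    simp only [phaseSum_quadratic_form, Matrix.of_apply]
    exact integrable_finsetSum _ fun a _ => integrable_finsetSum _ fun b _ => hterm a b
  have hval : ∫ f, star (phaseSum X v f) ⬝ᵥ
      (Matrix.of fun k l => chat θ k l f) *ᵥ phaseSum X v f =
      ((∑ a, ∑ b, v a * c θ a.1 b.1 (X a.1 a.2 - X b.1 b.2) * v b : ℝ) : ℂ) := by
    simp only [phaseSum_quadratic_form, Matrix.of_apply]
    rw [integral_finsetSum _ fun a _ => integrable_finsetSum _ fun b _ => hterm a b,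
      Complex.ofReal_sum]
    refine Finset.sum_congr rfl fun a _ => ?_
    rw [integral_finsetSum _ fun b _ => hterm a b, Complex.ofReal_sum]
    refine Finset.sum_congr rfl fun b _ => ?_
    rw [integral_const_mul, ← hinv θ hθ]
    push_cast
    ring
  obtain ⟨hint', hval'⟩ := integral_mul_sum_norm_sq_phaseSum hiw hwz X hsep v
  calc (δ / C * ∫ f, w f) * ∑ a, v a ^ 2
      = ∫ f, δ / C * (w f * ∑ k, ‖phaseSum X v f k‖ ^ 2) := by
        rw [integral_const_mul, hval', mul_assoc]
    _ ≤ ∫ f, (star (phaseSum X v f) ⬝ᵥ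
          (Matrix.of fun k l => chat θ k l f) *ᵥ phaseSum X v f).re :=
        integral_mono (hint'.const_mul _) hint.re fun f => hbound θ hθ f _
    _ = _ := by
        have h := integral_re hint
        rw [hval] at h
        exact h
end

section
/- Let d ≥ 1, p ≥ 1 and let c_{kℓ} : ℝ^d → ℝ (1 ≤ k,ℓ ≤ p) satisfy: (i) |c_{kℓ}(x)| ≤ A/(1 + |x|^{d+τ}) for all x, with fixed A < ∞, τ > 0; (ii) c_{kℓ}(x) = ∫_{ℝ^d} ĉ_{kℓ}(f) e^{i f·x} df for all x; (iii) λ₁(Ĉ(f)) > 0 for all f ∈ ℝ^d, where Ĉ(f) = {ĉ_{kℓ}(f)}; (iv) there exists Δ > 0 with |x^{(k)}_i − x^{(k)}_j| ≥ Δ for all k and all i ≠ j. For n₁,…,n_p ∈ ℕ⁺ let Σ be the N × N covariance matrix (N = n₁+⋯+n_p) with entry at row N_{k−1}+i and column N_{ℓ−1}+j equal to c_{kℓ}(x^{(k)}_i − x^{(ℓ)}_j). Then for any family of N × N real symmetric positive semidefinite matrices A' with all diagonal entries equal to 1 (one matrix for each choice of n₁,…,n_p), the tapered covariance matrices Σ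 ∘ A' satisfy inf over all n₁,…,n_p ∈ ℕ⁺ of λ₁(Σ ∘ A') > 0, where ∘ denotes the Schur (entrywise) product. -/
open MeasureTheory Matrix Complex
open scoped BigOperators Real

open scoped FourierTransform SchwartzMap InnerProductSpace

/-- The energy spectrum of a Schwartz function supported in a ball of radius `Δ / 2` has a Fourier
transform vanishing at distance at least `Δ` from the origin. -/
lemma integral_norm_sq_fourier_mul_exp_eq_zero (φ : 𝓢(ℝ, ℂ)) {Δ x : ℝ}
    (hφ : tsupport φ ⊆ Metric.ball 0 (Δ / 2)) (hx : Δ ≤ |x|) :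
    ∫ f : ℝ, ((‖𝓕 φ (f / (2 * π))‖ ^ 2 : ℝ) : ℂ) * cexp (I * ((f * x : ℝ) : ℂ)) = 0 := by
  have hshift (u : ℝ) : 𝓕 (φ.compSubConstCLM ℂ (-x)) u = cexp (I * ((2 * π * u * x : ℝ) : ℂ)) *
      𝓕 φ u := by
    have h := congrFun (VectorFourier.fourierIntegral_comp_add_right Real.fourierChar volume
      (innerₗ ℝ) (φ : ℝ → ℂ) x) u
    have e : (φ.compSubConstCLM ℂ (-x) : ℝ → ℂ) = (φ : ℝ → ℂ) ∘ fun v ↦ v + x := by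
      ext v; simp
    rw [SchwartzMap.fourier_coe, e, SchwartzMap.fourier_coe]
    refine h.trans ?_
    rw [Circle.smul_def, Real.fourierChar_apply, smul_eq_mul]
    congr 2
    simp
    ring
  have hzero : ∫ u : ℝ, ((‖𝓕 φ u‖ ^ 2 : ℝ) : ℂ) * cexp (I * ((2 * π * u * x : ℝ) : ℂ)) = 0 := by
    have h := SchwartzMap.integral_inner_fourier_fourier φ (φ.compSubConstCLM ℂ (-x))
    have hvanish : ∀ y, ⟪φ y, φ.compSubConstCLM ℂ (-x) y⟫_ℂ = 0 := by
      intro y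
      by_cases h1 : φ y = 0
      · simp [h1]
      by_cases h2 : φ (y + x) = 0
      · simp [h2]
      have h1' := hφ (subset_tsupport _ h1)
      have h2' := hφ (subset_tsupport _ h2)
      rw [mem_ball_zero_iff, Real.norm_eq_abs] at h1' h2'
      have := abs_sub (y + x) y
      rw [add_sub_cancel_left] at this
      linarith
    simp_rw [hvanish, integral_zero] at h
    rw [← h]
    congr 1
    ext u
    rw [hshift, RCLike.inner_apply, mul_assoc (cexp _), RCLike.mul_conj, mul_comm]
    simp
  have h := Measure.integral_comp_div
    (fun u : ℝ => ((‖𝓕 φ u‖ ^ 2 : ℝ) : ℂ) * cexp (I * ((2 * π * u * x : ℝ) : ℂ))) (2 * π)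
  rw [hzero, smul_zero] at h
  rw [← h]
  congr 1
  ext f
  rw [mul_div_cancel₀ f (by positivity)]

lemma SchwartzMap.integrable_norm_sq_comp_div (ψ : 𝓢(ℝ, ℂ)) {r : ℝ} (hr : r ≠ 0) :
    Integrable fun f : ℝ => ‖ψ (f / r)‖ ^ 2 :=
  (MemLp.integrable_norm_pow (p := 2) (ψ.memLp 2) two_ne_zero).comp_div hr

/-- A nonnegative bounded weight on the line whose Fourier transform, and that of its second
moment, are supported in `(-Δ, Δ)`. -/
lemma exists_weight_fourier_supported {Δ : ℝ} (hΔ : 0 < Δ) :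
    ∃ G : ℝ → ℝ, (∀ f, 0 ≤ G f) ∧ (∃ M, ∀ f, G f ≤ M) ∧ Integrable G ∧
      Integrable (fun f => f ^ 2 * G f) ∧ 0 < ∫ f, G f ∧
      ∀ x : ℝ, Δ ≤ |x| → ∫ f, (G f : ℂ) * cexp (I * ((f * x : ℝ) : ℂ)) = 0 ∧
        ∫ f, ((f ^ 2 * G f : ℝ) : ℂ) * cexp (I * ((f * x : ℝ) : ℂ)) = 0 := by
  let b : ContDiffBump (0 : ℝ) := ⟨Δ / 4, Δ / 3, by positivity, by linarith⟩
  have hb_supp : HasCompactSupport fun x => (b x : ℂ) :=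
    b.hasCompactSupport.comp_left Complex.ofReal_zero
  let φ : 𝓢(ℝ, ℂ) := hb_supp.toSchwartzMap (Complex.ofRealCLM.contDiff.comp b.contDiff)
  have hφ (x : ℝ) : φ x = b x := rfl
  have hsupp : tsupport φ ⊆ Metric.ball 0 (Δ / 2) := by
    have h1 : tsupport φ ⊆ tsupport b := closure_mono fun x hx h => hx (by simp [hφ, h])
    refine h1.trans (b.tsupport_eq.le.trans (Metric.closedBall_subset_ball ?_))
    change Δ / 3 < Δ / 2
    linarith
  let ψ := SchwartzMap.derivCLM ℂ ℂ φ
  have hψsupp : tsupport ψ ⊆ Metric.ball 0 (Δ / 2) :=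
    (tsupport_deriv_subset (f := (φ : ℝ → ℂ))).trans hsupp
  have hψ (f : ℝ) : ‖𝓕 ψ (f / (2 * π))‖ ^ 2 = f ^ 2 * ‖𝓕 φ (f / (2 * π))‖ ^ 2 := by
    have h := congrFun (Real.fourier_deriv φ.integrable φ.differentiable ψ.integrable)
      (f / (2 * π))
    have h' : 𝓕 ψ (f / (2 * π)) = (f * I) * 𝓕 φ (f / (2 * π)) := by
      refine h.trans ?_
      rw [smul_eq_mul, SchwartzMap.fourier_coe]
      congr 1
      push_cast
      have : (π : ℂ) ≠ 0 := by exact_mod_cast Real.pi_ne_zero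
      field_simp
    rw [h', norm_mul, mul_pow]
    simp
  have hpi : (2 * π : ℝ) ≠ 0 := by positivity
  refine ⟨fun f => ‖𝓕 φ (f / (2 * π))‖ ^ 2, fun f => by positivity, ?_,
    SchwartzMap.integrable_norm_sq_comp_div _ hpi, ?_, ?_, fun x hx => ⟨?_, ?_⟩⟩
  · obtain ⟨M, hM⟩ := (𝓕 φ).decay 0 0
    refine ⟨M ^ 2, fun f => ?_⟩
    have := hM.2 (f / (2 * π))
    simp only [pow_zero, one_mul, norm_iteratedFDeriv_zero] at this
    exact pow_le_pow_left₀ (norm_nonneg _) this 2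
  · simp_rw [← hψ]
    exact SchwartzMap.integrable_norm_sq_comp_div _ hpi
  · rw [Measure.integral_comp_div (fun u : ℝ => ‖𝓕 φ u‖ ^ 2) (2 * π),
      SchwartzMap.integral_norm_sq_fourier]
    refine smul_pos (by positivity) ?_
    have hc : Continuous fun x => ‖φ x‖ ^ 2 := by have := φ.continuous; fun_prop
    refine hc.integral_pos_of_hasCompactSupport_nonneg_nonzero (x := 0) ?_ (fun x => by positivity)
      ?_
    · exact hb_supp.comp_left (g := fun z : ℂ => ‖z‖ ^ 2) (by simp)
    · have : b 0 ≠ 0 := (b.pos_of_mem_ball (by simpa using b.rOut_pos)).ne'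
      simpa [hφ] using this
  · exact integral_norm_sq_fourier_mul_exp_eq_zero φ hsupp hx
  · simp_rw [← hψ]
    exact integral_norm_sq_fourier_mul_exp_eq_zero ψ hψsupp hx

lemma integral_prod_mul_exp_sum {ι : Type*} [Fintype ι] (g : ι → ℝ → ℝ) (x : ι → ℝ) :
    ∫ f : ι → ℝ, ((∏ s, g s (f s) : ℝ) : ℂ) * cexp (I * ((∑ s, f s * x s : ℝ) : ℂ)) =
      ∏ s, ∫ u : ℝ, (g s u : ℂ) * cexp (I * ((u * x s : ℝ) : ℂ)) := by
  rw [← integral_fintype_prod_volume_eq_prod]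
  congr 1
  ext f
  rw [Finset.prod_mul_distrib, ← Complex.exp_sum, ← Finset.mul_sum]
  push_cast
  rfl

lemma integrable_mul_exp_iff {ι : Type*} [Fintype ι] {g : (ι → ℝ) → ℂ} (x : ι → ℝ) :
    Integrable (fun f => g f * cexp (I * ((∑ t, f t * x t : ℝ) : ℂ))) ↔ Integrable g := by
  have key (g : (ι → ℝ) → ℂ) (hg : Integrable g) (x : ι → ℝ) :
      Integrable (fun f => g f * cexp (I * ((∑ t, f t * x t : ℝ) : ℂ))) :=
    hg.mul_bdd (c := 1) (Continuous.aestronglyMeasurable (by fun_prop))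
      (.of_forall fun f => (Complex.norm_exp_I_mul_ofReal _).le)
  refine ⟨fun h => ?_, fun h => key g h x⟩
  convert key _ h (-x) using 2 with f
  rw [mul_assoc, ← Complex.exp_add]
  simp

/-- An upper-bounded integrable weight, nonpositive outside a ball, whose Fourier transform is
positive at the origin and vanishes outside the ball of radius `Δ`. -/
lemma exists_weight_pi_fourier_supported (ι : Type*) [Fintype ι] {Δ : ℝ} (hΔ : 0 < Δ) :
    ∃ h : (ι → ℝ) → ℝ, Integrable h ∧
      (∃ K M : ℝ, 0 < M ∧ (∀ f, h f ≤ M) ∧ ∀ f, K < ‖f‖ → h f ≤ 0) ∧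
      0 < ∫ f, h f ∧
      ∀ x : ι → ℝ, Δ ≤ ‖x‖ →
        ∫ f, (h f : ℂ) * cexp (I * ((∑ t, f t * x t : ℝ) : ℂ)) = 0 := by
  classical
  obtain ⟨G, hG0, ⟨M, hM⟩, hGint, hG2int, hGpos, hGx⟩ := exists_weight_fourier_supported hΔ
  let g (t s : ι) (u : ℝ) : ℝ := if s = t then u ^ 2 * G u else G u
  have hg (t : ι) (f : ι → ℝ) : ∏ s, g t s (f s) = f t ^ 2 * ∏ s, G (f s) := by
    have (s : ι) : g t s (f s) = (if s = t then f s ^ 2 else 1) * G (f s) := by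
      simp only [g]; split_ifs <;> simp
    simp_rw [this, Finset.prod_mul_distrib]
    simp
  have hgint (t s : ι) : Integrable (g t s) := by
    simp only [g]; split_ifs
    exacts [hG2int, hGint]
  have hP : Integrable fun f : ι → ℝ => ∏ s, G (f s) := Integrable.fintype_prod fun _ => hGint
  have hPt (t : ι) : Integrable fun f : ι → ℝ => ∏ s, g t s (f s) :=
    Integrable.fintype_prod (hgint t)
  have hPpos : 0 < ∫ f : ι → ℝ, ∏ s, G (f s) := by
    rw [integral_fintype_prod_volume_eq_pow G]
    positivity
  set P := ∫ f : ι → ℝ, ∏ s, G (f s)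
  set R := ∑ t, ∫ f : ι → ℝ, ∏ s, g t s (f s)
  have hM0 : 0 ≤ M := (hG0 0).trans (hM 0)
  have hsumint : Integrable fun f : ι → ℝ => ∑ t, ∏ s, g t s (f s) :=
    integrable_finsetSum _ fun t _ => hPt t
  obtain ⟨K, hK0, hK⟩ : ∃ K : ℝ, 0 < K ∧ R < K ^ 2 * P := by
    refine ⟨|R| / P + 1, by positivity, ?_⟩
    have h0 : 0 ≤ |R| / P := by positivity
    have h1 : |R| / P * P = |R| := by field_simp
    nlinarith [le_abs_self R, mul_nonneg (mul_nonneg h0 h0) hPpos.le]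
  refine ⟨fun f => K ^ 2 * ∏ s, G (f s) - ∑ t, ∏ s, g t s (f s),
    (hP.const_mul _).sub hsumint, ⟨K, K ^ 2 * M ^ Fintype.card ι + 1, by positivity, ?_, ?_⟩,
    ?_, ?_⟩
  · intro f
    have h1 : ∏ s, G (f s) ≤ M ^ Fintype.card ι := by
      refine (Finset.prod_le_prod (fun s _ => hG0 _) (fun s _ => hM (f s))).trans ?_
      simp
    have h2 : 0 ≤ ∑ t, ∏ s, g t s (f s) := Finset.sum_nonneg fun t _ => by
      rw [hg]
      exact mul_nonneg (sq_nonneg _) (Finset.prod_nonneg fun s _ => hG0 _)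
    have h3 := mul_le_mul_of_nonneg_left h1 (sq_nonneg K)
    dsimp only
    linarith
  · intro f hf
    obtain ⟨t, ht⟩ : ∃ t, K < ‖f t‖ := by
      by_contra! hcon
      exact hf.not_ge ((pi_norm_le_iff_of_nonneg hK0.le).2 hcon)
    have h1 : K ^ 2 ≤ ∑ t, f t ^ 2 := by
      refine le_trans ?_ (Finset.single_le_sum (fun s _ => sq_nonneg (f s)) (Finset.mem_univ t))
      rw [← sq_abs (f t)]
      exact pow_le_pow_left₀ hK0.le ht.le 2
    simp_rw [hg, ← Finset.sum_mul, ← sub_mul]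
    exact mul_nonpos_of_nonpos_of_nonneg (by linarith) (Finset.prod_nonneg fun s _ => hG0 _)
  · rw [integral_sub (hP.const_mul _) hsumint, integral_const_mul,
      integral_finsetSum _ fun t _ => hPt t]
    linarith
  · intro x hx
    obtain ⟨t, ht⟩ : ∃ t, Δ ≤ |x t| := by
      by_contra! hcon
      exact hx.not_gt ((pi_norm_lt_iff hΔ).2 hcon)
    have e (f : ι → ℝ) : ((K ^ 2 * ∏ s, G (f s) - ∑ t, ∏ s, g t s (f s) : ℝ) : ℂ) *
        cexp (I * ((∑ t, f t * x t : ℝ) : ℂ)) =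
        (K ^ 2 : ℂ) * (((∏ s, G (f s) : ℝ) : ℂ) * cexp (I * ((∑ t, f t * x t : ℝ) : ℂ))) -
        ∑ r, ((∏ s, g r s (f s) : ℝ) : ℂ) * cexp (I * ((∑ t, f t * x t : ℝ) : ℂ)) := by
      rw [← Finset.sum_mul]; push_cast; ring
    have hPe : Integrable fun f : ι → ℝ =>
        ((∏ s, G (f s) : ℝ) : ℂ) * cexp (I * ((∑ t, f t * x t : ℝ) : ℂ)) :=
      (integrable_mul_exp_iff x).2 hP.ofReal
    have hPte (r : ι) : Integrable fun f : ι → ℝ =>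
        ((∏ s, g r s (f s) : ℝ) : ℂ) * cexp (I * ((∑ t, f t * x t : ℝ) : ℂ)) :=
      (integrable_mul_exp_iff x).2 (hPt r).ofReal
    simp_rw [e]
    rw [integral_sub (hPe.const_mul _) (integrable_finsetSum _ fun r _ => hPte r),
      integral_const_mul, integral_finsetSum _ fun r _ => hPte r]
    rw [integral_prod_mul_exp_sum (fun _ => G), Finset.prod_eq_zero (Finset.mem_univ t)
      (hGx _ ht).1, mul_zero, zero_sub, neg_eq_zero]
    refine Finset.sum_eq_zero fun r _ => ?_
    rw [integral_prod_mul_exp_sum (g r)]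
    refine Finset.prod_eq_zero (Finset.mem_univ t) ?_
    simp only [g]
    split_ifs
    exacts [(hGx _ ht).2, (hGx _ ht).1]

lemma continuous_integral_mul_exp {ι : Type*} [Fintype ι] {g : (ι → ℝ) → ℂ} (hg : Integrable g) :
    Continuous fun x : ι → ℝ => ∫ f, g f * cexp (I * ((∑ t, f t * x t : ℝ) : ℂ)) := by
  refine continuous_of_dominated (bound := fun f => ‖g f‖)
    (fun x => ((integrable_mul_exp_iff x).2 hg).aestronglyMeasurable)
    (fun x => .of_forall fun f => ?_)
    hg.norm (.of_forall fun f => by fun_prop)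
  rw [norm_mul, Complex.norm_exp_I_mul_ofReal, mul_one]

lemma Continuous.integrable_of_abs_le_div_one_add_norm_rpow {ι : Type*} [Fintype ι]
    {g : (ι → ℝ) → ℝ} (hg : Continuous g) {A τ : ℝ} (hτ : 0 < τ)
    (hdecay : ∀ x, |g x| ≤ A / (1 + ‖x‖ ^ ((Fintype.card ι : ℝ) + τ))) : Integrable g := by
  set r := (Fintype.card ι : ℝ) + τ
  have hr : 0 < r := by positivity
  have hint : Integrable fun x : ι → ℝ => (1 + ‖x‖) ^ (-r) :=
    integrable_one_add_norm (by simp [r, hτ])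
  refine (hint.const_mul (|A| * 2 ^ r)).mono' hg.aestronglyMeasurable (.of_forall fun x => ?_)
  have hx := norm_nonneg x
  have key : (1 + ‖x‖) ^ r ≤ 2 ^ r * (1 + ‖x‖ ^ r) := by
    rcases le_total ‖x‖ 1 with h | h
    · calc (1 + ‖x‖) ^ r ≤ 2 ^ r := Real.rpow_le_rpow (by positivity) (by linarith) hr.le
        _ ≤ 2 ^ r * (1 + ‖x‖ ^ r) := le_mul_of_one_le_right (by positivity)
          (by linarith [Real.rpow_nonneg hx r])
    · calc (1 + ‖x‖) ^ r ≤ (2 * ‖x‖) ^ r :=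
            Real.rpow_le_rpow (by positivity) (by linarith) hr.le
        _ = 2 ^ r * ‖x‖ ^ r := Real.mul_rpow (by norm_num) hx
        _ ≤ 2 ^ r * (1 + ‖x‖ ^ r) := by gcongr; linarith
  have h0 : 0 < 1 + ‖x‖ ^ r := by positivity
  rw [Real.norm_eq_abs, Real.rpow_neg (by positivity), ← div_eq_mul_inv,
    le_div_iff₀ (by positivity)]
  calc |g x| * (1 + ‖x‖) ^ r ≤ |A| / (1 + ‖x‖ ^ r) * (2 ^ r * (1 + ‖x‖ ^ r)) := by
        gcongr
        refine (hdecay x).trans ?_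
        gcongr
        exact le_abs_self A
    _ = |A| * 2 ^ r := by field_simp

/-- A continuous family of positive definite matrices is uniformly positive definite on compact
sets. -/
lemma exists_forall_mul_sum_norm_sq_le_re_dotProduct {E : Type*} [TopologicalSpace E] {p : ℕ}
    {H : E → Matrix (Fin p) (Fin p) ℂ} (hH : Continuous H)
    (hpos : ∀ f z, z ≠ 0 → 0 < (star z ⬝ᵥ (H f *ᵥ z)).re)
    {S : Set E} (hS : IsCompact S) :
    ∃ m > (0 : ℝ), ∀ f ∈ S, ∀ z : Fin p → ℂ,
      m * ∑ k, ‖z k‖ ^ 2 ≤ (star z ⬝ᵥ (H f *ᵥ z)).re := by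
  obtain ⟨m, hm, hmin⟩ := (hS.prod (isCompact_sphere (0 : Fin p → ℂ) 1)).exists_forall_le'
    (f := fun q : E × (Fin p → ℂ) => (star q.2 ⬝ᵥ (H q.1 *ᵥ q.2)).re) (a := 0)
    (by
      refine Continuous.continuousOn ?_
      exact Complex.continuous_re.comp (continuous_snd.star.dotProduct
        ((hH.comp continuous_fst).matrix_mulVec continuous_snd)))
    (fun q hq => hpos q.1 q.2 fun h0 => by simp [h0] at hq)
  refine ⟨m / (p + 1), by positivity, fun f hf z => ?_⟩
  rcases eq_or_ne z 0 with rfl | hz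
  · simp
  have hz' : ‖z‖ ≠ 0 := norm_ne_zero_iff.2 hz
  have h1 := hmin (f, ((‖z‖ : ℂ)⁻¹) • z) ⟨hf, by simp [norm_smul, hz']⟩
  have h2 : (star (((‖z‖ : ℂ)⁻¹) • z) ⬝ᵥ (H f *ᵥ (((‖z‖ : ℂ)⁻¹) • z))).re =
      (‖z‖ ^ 2)⁻¹ * (star z ⬝ᵥ (H f *ᵥ z)).re := by
    have : star ((‖z‖ : ℂ)⁻¹) = (‖z‖ : ℂ)⁻¹ := by
      rw [star_inv₀, Complex.star_def, Complex.conj_ofReal]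
    rw [star_smul, Matrix.mulVec_smul, smul_dotProduct, dotProduct_smul, this, smul_smul,
      smul_eq_mul, ← Complex.re_ofReal_mul]
    push_cast
    congr 2
    rw [sq, mul_inv]
  dsimp only at h1
  rw [h2, inv_mul_eq_div, le_div_iff₀ (by positivity)] at h1
  have h3 : ∑ k, ‖z k‖ ^ 2 ≤ p * ‖z‖ ^ 2 := by
    refine (Finset.sum_le_sum fun k _ => pow_le_pow_left₀ (norm_nonneg _) (norm_le_pi_norm z k)
      2).trans ?_
    simp
  refine le_trans ?_ h1
  rw [div_mul_eq_mul_div, div_le_iff₀ (by positivity)]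
  nlinarith [mul_le_mul_of_nonneg_left h3 hm.le, mul_nonneg hm.le (sq_nonneg ‖z‖)]

/-- The vector of exponential sums attached to weighted points grouped in `p` classes. -/
noncomputable def exponentialSums {ι : Type*} [Fintype ι] {p : ℕ} {n : Fin p → ℕ}
    (X : (k : Fin p) × Fin (n k) → ι → ℝ) (v : (k : Fin p) × Fin (n k) → ℝ) (f : ι → ℝ) :
    Fin p → ℂ :=
  fun k => ∑ i, (v ⟨k, i⟩ : ℂ) * cexp (-(I * ((∑ t, f t * X ⟨k, i⟩ t : ℝ) : ℂ)))

lemma star_exponentialSums_dotProduct {ι : Type*} [Fintype ι] {p : ℕ} {n : Fin p → ℕ}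
    (X : (k : Fin p) × Fin (n k) → ι → ℝ) (v : (k : Fin p) × Fin (n k) → ℝ) (f : ι → ℝ)
    (E : Matrix (Fin p) (Fin p) ℂ) :
    star (exponentialSums X v f) ⬝ᵥ (E *ᵥ exponentialSums X v f) =
      ∑ a, ∑ b, (v a * v b : ℂ) *
        (E a.1 b.1 * cexp (I * ((∑ t, f t * (X a - X b) t : ℝ) : ℂ))) := by
  simp only [dotProduct, mulVec, exponentialSums, Fintype.sum_sigma, Pi.star_apply, star_sum,
    star_mul', Finset.sum_mul, Finset.mul_sum]
  refine Finset.sum_congr rfl fun k _ => ?_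
  rw [Finset.sum_comm (s := (Finset.univ : Finset (Fin (n k))))]
  refine Finset.sum_congr rfl fun l _ => ?_
  rw [Finset.sum_comm]
  refine Finset.sum_congr rfl fun i _ => Finset.sum_congr rfl fun j _ => ?_
  have hexp : cexp (I * ((∑ t, f t * (X ⟨k, i⟩ - X ⟨l, j⟩) t : ℝ) : ℂ)) =
      star (cexp (-(I * ((∑ t, f t * X ⟨k, i⟩ t : ℝ) : ℂ)))) *
        cexp (-(I * ((∑ t, f t * X ⟨l, j⟩ t : ℝ) : ℂ))) := by
    rw [Complex.star_def, ← Complex.exp_conj, ← Complex.exp_add]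
    simp only [map_neg, map_mul, Complex.conj_I, Complex.conj_ofReal, Pi.sub_apply, mul_sub,
      Finset.sum_sub_distrib]
    push_cast
    ring_nf
  rw [hexp, Complex.star_def, Complex.conj_ofReal]
  ring

lemma integral_star_exponentialSums_dotProduct {ι : Type*} [Fintype ι] {p : ℕ} {n : Fin p → ℕ}
    (X : (k : Fin p) × Fin (n k) → ι → ℝ) (v : (k : Fin p) × Fin (n k) → ℝ)
    {E : (ι → ℝ) → Matrix (Fin p) (Fin p) ℂ} (hE : ∀ k l, Integrable fun f => E f k l) :
    Integrable (fun f => star (exponentialSums X v f) ⬝ᵥ (E f *ᵥ exponentialSums X v f)) ∧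
    ∫ f, star (exponentialSums X v f) ⬝ᵥ (E f *ᵥ exponentialSums X v f) =
      ∑ a, ∑ b, (v a * v b : ℂ) *
        ∫ f, E f a.1 b.1 * cexp (I * ((∑ t, f t * (X a - X b) t : ℝ) : ℂ)) := by
  have hint (a b : (k : Fin p) × Fin (n k)) : Integrable fun f => (v a * v b : ℂ) *
      (E f a.1 b.1 * cexp (I * ((∑ t, f t * (X a - X b) t : ℝ) : ℂ))) :=
    ((integrable_mul_exp_iff _).2 (hE _ _)).const_mul _
  simp_rw [star_exponentialSums_dotProduct]
  refine ⟨integrable_finsetSum _ fun a _ => integrable_finsetSum _ fun b _ => hint a b, ?_⟩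
  rw [integral_finsetSum _ fun a _ => integrable_finsetSum _ fun b _ => hint a b]
  refine Finset.sum_congr rfl fun a _ => ?_
  rw [integral_finsetSum _ fun b _ => hint a b]
  exact Finset.sum_congr rfl fun b _ => integral_const_mul _ _

/-- Schur multiplication by a positive semidefinite matrix with unit diagonal preserves lower
bounds of quadratic forms. -/
lemma Matrix.PosSemidef.mul_sum_sq_le_hadamard {α : Type*} [Fintype α]
    {B : Matrix α α ℝ} (hB : B.PosSemidef) (hdiag : ∀ a, B a a = 1) {S : α → α → ℝ} {ε : ℝ}
    (hS : ∀ w : α → ℝ, ε * ∑ a, w a ^ 2 ≤ ∑ a, ∑ b, w a * S a b * w b) (v : α → ℝ) :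
    ε * ∑ a, v a ^ 2 ≤ ∑ a, ∑ b, v a * (S a b * B a b) * v b := by
  classical
  obtain ⟨C, hC⟩ : ∃ C : Matrix α α ℝ, B = Cᴴ * C := by
    open scoped MatrixOrder in
    exact CStarAlgebra.nonneg_iff_eq_star_mul_self.mp hB.nonneg
  have hCab (a b : α) : B a b = ∑ m, C m a * C m b := by
    rw [hC, Matrix.mul_apply]; simp
  have h := Finset.sum_le_sum fun m (_ : m ∈ Finset.univ) => hS fun a => v a * C m a
  have hl : ∑ m, ε * ∑ a, (v a * C m a) ^ 2 = ε * ∑ a, v a ^ 2 := by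
    rw [← Finset.mul_sum, Finset.sum_comm]
    congr 1
    refine Finset.sum_congr rfl fun a _ => ?_
    rw [← mul_one (v a ^ 2), ← hdiag a, hCab, Finset.mul_sum]
    exact Finset.sum_congr rfl fun m _ => by ring
  rw [hl] at h
  refine h.trans_eq ?_
  rw [Finset.sum_comm]
  refine Finset.sum_congr rfl fun a _ => ?_
  rw [Finset.sum_comm]
  refine Finset.sum_congr rfl fun b _ => ?_
  rw [hCab, Finset.mul_sum, Finset.mul_sum, Finset.sum_mul]
  exact Finset.sum_congr rfl fun m _ => by ring

open scoped ComplexOrder in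
lemma Matrix.IsHermitian.re_dotProduct_pos_of_eigenvalues_pos {n : Type*} [Fintype n]
    [DecidableEq n] {H : Matrix n n ℂ} (hH : H.IsHermitian) (hpos : ∀ i, 0 < hH.eigenvalues i)
    {z : n → ℂ} (hz : z ≠ 0) : 0 < (star z ⬝ᵥ (H *ᵥ z)).re :=
  (hH.posDef_iff_eigenvalues_pos.2 hpos).re_dotProduct_pos hz

/-- Uniform lower bound for the quadratic forms of covariance matrices with a continuous integrable
positive definite spectral density, over configurations that are `Δ`-separated in each class. -/
lemma exists_forall_mul_sum_sq_le_covariance {ι : Type*} [Fintype ι] {p : ℕ}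
    {c : Fin p → Fin p → (ι → ℝ) → ℝ} {H : (ι → ℝ) → Matrix (Fin p) (Fin p) ℂ}
    (hcont : Continuous H) (hint : ∀ k l, Integrable fun f => H f k l)
    (hinv : ∀ k l (x : ι → ℝ), (c k l x : ℂ) =
      ∫ f : ι → ℝ, H f k l * cexp (I * ((∑ t, f t * x t : ℝ) : ℂ)))
    (hpos : ∀ f z, z ≠ 0 → 0 < (star z ⬝ᵥ (H f *ᵥ z)).re) {Δ : ℝ} (hΔ : 0 < Δ) :
    ∃ ε > (0 : ℝ), ∀ (n : Fin p → ℕ) (X : (k : Fin p) × Fin (n k) → ι → ℝ),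
      (∀ k (i j : Fin (n k)), i ≠ j → Δ ≤ ‖X ⟨k, i⟩ - X ⟨k, j⟩‖) →
      ∀ v : (k : Fin p) × Fin (n k) → ℝ,
        ε * ∑ a, v a ^ 2 ≤ ∑ a, ∑ b, v a * c a.1 b.1 (X a - X b) * v b := by
  obtain ⟨h, hhint, ⟨K, M, hM0, hM, hK⟩, hhpos, hhx⟩ := exists_weight_pi_fourier_supported ι hΔ
  obtain ⟨m, hm, hmH⟩ := exists_forall_mul_sum_norm_sq_le_re_dotProduct hcont hpos
    (isCompact_closedBall (0 : ι → ℝ) K)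
  have hpt (f : ι → ℝ) (z : Fin p → ℂ) :
      m / M * (h f * ∑ k, ‖z k‖ ^ 2) ≤ (star z ⬝ᵥ (H f *ᵥ z)).re := by
    have hz : 0 ≤ ∑ k, ‖z k‖ ^ 2 := by positivity
    by_cases hf : ‖f‖ ≤ K
    · refine le_trans ?_ (hmH f (mem_closedBall_zero_iff.2 hf) z)
      calc m / M * (h f * ∑ k, ‖z k‖ ^ 2) ≤ m / M * (M * ∑ k, ‖z k‖ ^ 2) := by
            gcongr; exact hM f
        _ = m * ∑ k, ‖z k‖ ^ 2 := by field_simp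
    · have h1 : m / M * (h f * ∑ k, ‖z k‖ ^ 2) ≤ 0 :=
        mul_nonpos_of_nonneg_of_nonpos (by positivity)
          (mul_nonpos_of_nonpos_of_nonneg (hK f (not_le.1 hf)) hz)
      refine h1.trans ?_
      rcases eq_or_ne z 0 with rfl | hz0
      · simp
      · exact (hpos f z hz0).le
  refine ⟨m / M * ∫ f, h f, by positivity, fun n X hX v => ?_⟩
  obtain ⟨hHint, hHeq⟩ := integral_star_exponentialSums_dotProduct X v hint
  let D (f : ι → ℝ) : Matrix (Fin p) (Fin p) ℂ := Matrix.diagonal fun _ => (h f : ℂ)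
  have hD (k l : Fin p) : Integrable fun f => D f k l := by
    rcases eq_or_ne k l with rfl | hkl
    · simpa [D] using hhint.ofReal (𝕜 := ℂ)
    · simp [D, Matrix.diagonal_apply_ne _ hkl]
  obtain ⟨hDint, hDeq⟩ := integral_star_exponentialSums_dotProduct X v hD
  have hDre (f : ι → ℝ) : (star (exponentialSums X v f) ⬝ᵥ (D f *ᵥ exponentialSums X v f)).re =
      h f * ∑ k, ‖exponentialSums X v f k‖ ^ 2 := by
    simp only [D, dotProduct, Matrix.mulVec_diagonal, Pi.star_apply, Complex.re_sum,
      Finset.mul_sum]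
    refine Finset.sum_congr rfl fun k _ => ?_
    rw [mul_left_comm, Complex.star_def, Complex.conj_mul', Complex.re_ofReal_mul]
    norm_cast
  have hDsum : ∑ a, ∑ b, (v a * v b : ℂ) *
      ∫ f, D f a.1 b.1 * cexp (I * ((∑ t, f t * (X a - X b) t : ℝ) : ℂ)) =
      (((∫ f, h f) * ∑ a, v a ^ 2 : ℝ) : ℂ) := by
    rw [Complex.ofReal_mul, Complex.ofReal_sum, Finset.mul_sum]
    refine Finset.sum_congr rfl fun a _ => ?_
    rw [Finset.sum_eq_single a]
    · simp only [D, Matrix.diagonal_apply_eq, sub_self, Pi.zero_apply, mul_zero,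
        Finset.sum_const_zero, Complex.ofReal_zero, Complex.exp_zero, mul_one]
      rw [integral_complex_ofReal]
      push_cast
      ring
    · rintro b - hba
      refine mul_eq_zero_of_right _ ?_
      obtain ⟨k, i⟩ := a
      obtain ⟨l, j⟩ := b
      rcases eq_or_ne k l with rfl | hkl
      · simp only [D, Matrix.diagonal_apply_eq]
        exact hhx _ (hX k i j fun hij => hba (by rw [hij]))
      · simp [D, Matrix.diagonal_apply_ne _ hkl]
    · simp
  have hHsum : ∑ a, ∑ b, (v a * v b : ℂ) *
      ∫ f, H f a.1 b.1 * cexp (I * ((∑ t, f t * (X a - X b) t : ℝ) : ℂ)) =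
      ((∑ a, ∑ b, v a * c a.1 b.1 (X a - X b) * v b : ℝ) : ℂ) := by
    simp_rw [← hinv]
    push_cast
    exact Finset.sum_congr rfl fun a _ => Finset.sum_congr rfl fun b _ => by ring
  have hHre : ∫ f, (star (exponentialSums X v f) ⬝ᵥ (H f *ᵥ exponentialSums X v f)).re =
      ∑ a, ∑ b, v a * c a.1 b.1 (X a - X b) * v b := by
    rw [← Complex.ofReal_re (∑ a, ∑ b, v a * c a.1 b.1 (X a - X b) * v b), ← hHsum, ← hHeq]
    exact integral_re hHint
  have hDre' : ∫ f, (star (exponentialSums X v f) ⬝ᵥ (D f *ᵥ exponentialSums X v f)).re =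
      (∫ f, h f) * ∑ a, v a ^ 2 := by
    rw [← Complex.ofReal_re ((∫ f, h f) * ∑ a, v a ^ 2), ← hDsum, ← hDeq]
    exact integral_re hDint
  rw [mul_assoc, ← hDre', ← hHre, ← integral_const_mul]
  refine integral_mono (hDint.re.const_mul _) hHint.re fun f => ?_
  change m / M * (star (exponentialSums X v f) ⬝ᵥ (D f *ᵥ exponentialSums X v f)).re ≤ _
  rw [hDre]
  exact hpt f _

/-- Under the hypotheses of the main theorem (polynomial decay, Fourier inversion, strictly
positive spectral density matrix, minimal distance between observation points of the same
component), for any family of real symmetric positive semidefinite taper matrices `A'` with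
unit diagonal (one matrix for each choice of sample sizes `n₁, …, n_p`), the smallest
eigenvalue of the tapered covariance matrices `Σ ∘ A'` (Schur product) is bounded away from
zero uniformly in `n₁, …, n_p`; the bound is expressed through the Rayleigh quotient. -/
theorem smallest_eigenvalue_tapered_covariance_matrix_bounded_away_from_zero
    (d p : ℕ) (hd : 1 ≤ d) (hp : 1 ≤ p)
    (c : Fin p → Fin p → (Fin d → ℝ) → ℝ)
    (A τ : ℝ) (hτ : 0 < τ)
    (hdecay : ∀ k l (x : Fin d → ℝ), |c k l x| ≤ A / (1 + ‖x‖ ^ ((d : ℝ) + τ)))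
    (chat : Fin p → Fin p → (Fin d → ℝ) → ℂ)
    (hchat : ∀ k l (f : Fin d → ℝ), chat k l f =
      ((2 * π : ℝ) ^ d : ℝ)⁻¹ •
        ∫ x : Fin d → ℝ, (c k l x : ℂ) *
          Complex.exp (-(Complex.I * ((∑ t, f t * x t : ℝ) : ℂ))))
    (hinv : ∀ k l (x : Fin d → ℝ), (c k l x : ℂ) =
      ∫ f : Fin d → ℝ, chat k l f *
        Complex.exp (Complex.I * ((∑ t, f t * x t : ℝ) : ℂ)))
    (hherm : ∀ f : Fin d → ℝ, (Matrix.of fun k l => chat k l f).IsHermitian)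
    (hpos : ∀ (f : Fin d → ℝ) (i : Fin p), 0 < (hherm f).eigenvalues i)
    (X : Fin p → ℕ → (Fin d → ℝ)) (Δ : ℝ) (hΔ : 0 < Δ)
    (hsep : ∀ (k : Fin p) (i j : ℕ), i ≠ j → Δ ≤ ‖X k i - X k j‖)
    (A' : (n : Fin p → ℕ) →
      Matrix ((k : Fin p) × Fin (n k)) ((k : Fin p) × Fin (n k)) ℝ)
    (hA'psd : ∀ n, (A' n).PosSemidef)
    (hA'diag : ∀ n a, A' n a a = 1) :
    ∃ ε > (0 : ℝ), ∀ n : Fin p → ℕ, (∀ k, 1 ≤ n k) →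
      ∀ v : ((k : Fin p) × Fin (n k)) → ℝ,
        ε * ∑ a, v a ^ 2 ≤
          ∑ a, ∑ b, v a * (c a.1 b.1 (X a.1 a.2 - X b.1 b.2) * A' n a b) * v b := by
  have hchat_int (k l : Fin p) : Integrable (chat k l) := by
    by_contra hnot
    have hc (x : Fin d → ℝ) : (c k l x : ℂ) = 0 := by
      rw [hinv]
      exact integral_undef fun h => hnot ((integrable_mul_exp_iff x).1 h)
    have hzero : chat k l = fun _ => 0 := by
      ext f
      simp [hchat, hc]
    exact hnot (hzero ▸ integrable_zero _ _ _)
  have hc_cont (k l : Fin p) : Continuous (c k l) := by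
    have h := Complex.continuous_re.comp (continuous_integral_mul_exp (hchat_int k l))
    simpa only [Function.comp_def, ← hinv, Complex.ofReal_re] using h
  have hc_int (k l : Fin p) : Integrable (c k l) :=
    (hc_cont k l).integrable_of_abs_le_div_one_add_norm_rpow hτ (by simpa using hdecay k l)
  have hchat_cont (k l : Fin p) : Continuous (chat k l) := by
    have h := ((continuous_integral_mul_exp (hc_int k l).ofReal).comp continuous_neg).const_smul
      ((2 * π : ℝ) ^ d : ℝ)⁻¹
    refine h.congr fun f => ?_
    rw [hchat]
    rw [Pi.smul_apply, Function.comp_apply]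
    congr 1
    refine integral_congr_ae (.of_forall fun x => ?_)
    simp [mul_comm]
  obtain ⟨ε, hε, hbound⟩ := exists_forall_mul_sum_sq_le_covariance
    (H := fun f => Matrix.of fun k l => chat k l f)
    (continuous_matrix hchat_cont) hchat_int hinv
    (fun f z hz => (hherm f).re_dotProduct_pos_of_eigenvalues_pos (hpos f) hz) hΔ
  refine ⟨ε, hε, fun n _ v => ?_⟩
  refine (hA'psd n).mul_sum_sq_le_hadamard (hA'diag n) (fun w => ?_) v
  exact hbound n (fun a => X a.1 a.2)
    (fun k i j hij => hsep k i j fun h => hij (Fin.ext h)) w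
end
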